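/- arXiv:2210.06703 — 8 statements merged into one kernel-verified Lean document; each statement's English description precedes it below -/
import Mathlib

section
/- Let G be a simple graph on n vertices, let r be a positive integer, and let u, v be two distinct nonadjacent vertices of G with deg_G(u) + deg_G(v) ≥ n. If the graph G + uv has a cycle cover of size at most r, then G itself has a cycle cover of size at most r. -/
/-- `G` has a cycle cover of size at most `r`: a set of at most `r` pairwise vertex-disjoint
cycles (single vertices counting as trivial cycles) such that every vertex of `G` belongs to
exactly one cycle of the set. -/
def HasCycleCoverLE {V : Type*} [Fintype V] (G : SimpleGraph V) (r : ℕ) : Prop :=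
  ∃ P : Finset (Finset V), P.card ≤ r ∧
    (∀ v : V, ∃! p, p ∈ P ∧ v ∈ p) ∧
    ∀ p ∈ P, (∃ x, p = {x}) ∨
      ∃ a : V, ∃ c : G.Walk a a, c.IsCycle ∧ ∀ x, x ∈ p ↔ x ∈ c.support


def CycL {V : Type*} (G : SimpleGraph V) (l : List V) : Prop :=
  l.Nodup ∧ 3 ≤ l.length ∧ Cycle.Chain G.Adj (l : Cycle V)

theorem cycL_of_walk {V : Type*} {G : SimpleGraph V} {a : V} (c : G.Walk a a) (hc : c.IsCycle) :
    ∃ l, CycL G l ∧ ∀ x, x ∈ c.support ↔ x ∈ l := by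
  cases c with
  | nil => simp at hc
  | cons h p =>
    rename_i b
    have h3 := hc.three_le_length
    rw [SimpleGraph.Walk.cons_isCycle_iff] at hc
    refine ⟨p.support, ⟨hc.1.support_nodup, by simpa using h3, ?_⟩, ?_⟩
    · rw [Cycle.chain_ne_nil _ p.support_ne_nil]
      simpa using (SimpleGraph.Walk.cons h p).isChain_adj_support
    · intro x
      simp
      rintro rfl; simp

theorem walk_of_cycL {V : Type*} {G : SimpleGraph V} {l : List V} (hl : CycL G l) :
    ∃ a, ∃ c : G.Walk a a, c.IsCycle ∧ ∀ x, x ∈ l ↔ x ∈ c.support := by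
  obtain ⟨h1, h2, h3⟩ := hl
  have hne : l ≠ [] := by rintro rfl; simp at h2
  rw [Cycle.chain_ne_nil _ hne] at h3
  obtain ⟨m, b, rfl⟩ : ∃ m b, l = b :: m := by
    cases l with
    | nil => simp at hne
    | cons b m => exact ⟨m, b, rfl⟩
  have h4 : (b :: m).IsChain G.Adj := h3.tail
  have h5 := h3.rel
  obtain ⟨p, hp, hlen⟩ : ∃ p : G.Walk b ((b :: m).getLast hne),
      p.support = b :: m ∧ p.length = (b :: m).length - 1 :=
    ⟨SimpleGraph.Walk.ofSupport (b :: m) hne h4, SimpleGraph.Walk.support_ofSupport hne h4,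
      SimpleGraph.Walk.length_ofSupport hne h4⟩
  refine ⟨_, SimpleGraph.Walk.cons h5 p, ?_, ?_⟩
  · rw [SimpleGraph.Walk.isCycle_iff_isPath_tail_and_le_length]
    refine ⟨?_, ?_⟩
    · simp [SimpleGraph.Walk.isPath_def]
      rw [hp]; simpa using h1
    · simp at h2 hlen ⊢
      omega
  · intro x
    rw [SimpleGraph.Walk.support_cons, hp, List.mem_cons (a := x) (b := (b :: m).getLast hne)]
    constructor
    · exact Or.inr
    · rintro (rfl | h)
      · exact List.getLast_mem hne
      · exact h

theorem count_split {V : Type*} (A B : V → Bool) (t : List V) : ∀ x : V,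
    (∃ l1 a b l2, x :: t = l1 ++ a :: b :: l2 ∧ A a ∧ B b) ∨
    (x :: t).dropLast.countP A + t.countP B ≤ t.length := by
  induction t with
  | nil => intro x; right; simp
  | cons y t ih =>
    intro x
    rcases ih y with ⟨l1, a, b, l2, h, ha, hb⟩ | h
    · left; exact ⟨x :: l1, a, b, l2, by simp [h], ha, hb⟩
    · by_cases hx : A x ∧ B y
      · left; exact ⟨[], x, y, t, rfl, hx.1, hx.2⟩
      · right
        rw [List.dropLast_cons_of_ne_nil (by simp), List.countP_cons, List.countP_cons]
        simp only [List.length_cons]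
        split_ifs <;> first | omega | (exfalso; tauto)

/-- closed list splitting gives a rotation -/
theorem rot_split {V : Type*} {z : V} {t l1 l2 : List V} {a b : V}
    (h : z :: (t ++ [z]) = l1 ++ a :: b :: l2) :
    ∃ m, (z :: t) ~r (m ++ [a]) ∧ (m ++ [a]).head? = some b := by
  rcases List.eq_nil_or_concat l2 with rfl | ⟨l2', w, rfl⟩
  · have h' : (z :: t) ++ [z] = (l1 ++ [a]) ++ [b] := by simpa using h
    obtain ⟨h1, h2⟩ := List.append_inj' h' rfl
    refine ⟨l1, by rw [h1], ?_⟩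
    rw [← h1]; simp at h2; simp [h2]
  · have h' : (z :: t) ++ [z] = (l1 ++ a :: b :: l2') ++ [w] := by simpa using h
    obtain ⟨h1, h2⟩ := List.append_inj' h' rfl
    refine ⟨b :: l2' ++ l1, ?_, by simp⟩
    rw [h1]
    have := List.isRotated_append (l := l1 ++ [a]) (l' := b :: l2')
    simpa using this

theorem cyc_count {V : Type*} (A B : V → Bool) (l : List V)
    (h : l.length < l.countP A + l.countP B) :
    ∃ m a b, l ~r (m ++ [a]) ∧ (m ++ [a]).head? = some b ∧ A a ∧ B b := by
  cases l with
  | nil => simp at h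
  | cons z t =>
    rcases count_split A B (t ++ [z]) z with ⟨l1, a, b, l2, h1, ha, hb⟩ | h1
    · obtain ⟨m, hm, hm'⟩ := rot_split h1
      exact ⟨m, a, b, hm, hm', ha, hb⟩
    · exfalso
      rw [← List.cons_append, List.dropLast_concat] at h1
      simp [List.countP_cons] at h1 h
      omega

theorem chain_lin {V : Type*} {R : V → V → Prop} {m : List V} {a b : V}
    (h : Cycle.Chain R ((m ++ [a] : List V) : Cycle V)) (hb : (m ++ [a]).head? = some b) :
    (m ++ [a]).IsChain R ∧ R a b := by
  rw [Cycle.chain_ne_nil _ (by simp)] at h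
  rw [List.isChain_cons] at h
  refine ⟨h.2, ?_⟩
  simpa using h.1 b hb

theorem chain_close {V : Type*} {R : V → V → Prop} {m : List V} {a b : V}
    (h : (m ++ [a]).IsChain R) (hb : (m ++ [a]).head? = some b) (hab : R a b) :
    Cycle.Chain R ((m ++ [a] : List V) : Cycle V) := by
  rw [Cycle.chain_ne_nil _ (by simp), List.isChain_cons]
  refine ⟨?_, h⟩
  intro y hy
  rw [hb] at hy
  simp at hy ⊢
  rw [← hy]; exact hab

theorem chain_or_break {V : Type*} (R : V → V → Prop) (l : List V) :
    Cycle.Chain R (l : Cycle V) ∨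
    ∃ m a b, l ~r (m ++ [a]) ∧ (m ++ [a]).head? = some b ∧ ¬ R a b := by
  cases l with
  | nil => left; exact Cycle.Chain.nil R
  | cons z t =>
    rw [Cycle.chain_coe_cons]
    by_cases h : List.IsChain R (z :: (t ++ [z]))
    · exact Or.inl h
    · right
      obtain ⟨n, hn, hR⟩ := List.exists_not_getElem_of_not_isChain h
      have : z :: (t ++ [z]) = (z :: (t ++ [z])).take n ++ (z :: (t ++ [z]))[n] ::
          (z :: (t ++ [z]))[n+1] :: (z :: (t ++ [z])).drop (n+2) := by
        conv_lhs => rw [← List.take_append_drop n (z :: (t ++ [z]))]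
        rw [List.drop_eq_getElem_cons (by omega), List.drop_eq_getElem_cons (by omega)]
      obtain ⟨m, h1, h2⟩ := rot_split this
      exact ⟨m, _, _, h1, h2, hR⟩

theorem piece_cases {V : Type*} (G : SimpleGraph V) (u v : V) (l : List V)
    (hl : CycL (G ⊔ SimpleGraph.fromEdgeSet {s(u, v)}) l) :
    CycL G l ∨ ∃ k, k ≠ [] ∧ (u :: k ++ [v]).Nodup ∧ (u :: k ++ [v]).IsChain G.Adj ∧
      ∀ x, x ∈ l ↔ x ∈ u :: k ++ [v] := by
  obtain ⟨h1, h2, h3⟩ := hl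
  rcases chain_or_break G.Adj l with h | ⟨m, a, b, hr, hb, hab⟩
  · exact Or.inl ⟨h1, h2, h⟩
  right
  rw [Cycle.coe_eq_coe.2 hr] at h3
  obtain ⟨h4, h5⟩ := chain_lin h3 hb
  rw [hr.nodup_iff] at h1
  rw [hr.perm.length_eq] at h2
  cases m with
  | nil => simp at h2
  | cons b' k =>
    simp at hb
    subst hb
    have hk : k ≠ [] := by rintro rfl; simp at h2
    have hs : s(a, b') = s(u, v) := by
      simp [hab] at h5
      simpa using h5.1
    have hG : ∀ x y, (G ⊔ SimpleGraph.fromEdgeSet {s(u, v)}).Adj x y → 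
        s(x, y) = s(a, b') ∨ G.Adj x y := by
      intro x y hxy
      rw [hs]
      simp at hxy ⊢
      tauto
    have hc : (b' :: k ++ [a]).IsChain G.Adj := by
      have e1 : (b' :: k).IsChain G.Adj := by
        refine (h4.left_of_append).imp_of_mem_imp ?_
        intro x y hx hy hxy
        refine (hG x y hxy).resolve_left ?_
        intro he
        have : a ∈ b' :: k := by
          have : a ∈ s(x, y) := by rw [he]; simp
          rcases Sym2.mem_iff.1 this with rfl | rfl <;> assumption
        rw [List.nodup_append] at h1
        exact h1.2.2 a this a (by simp) rfl
      have e2 : (k ++ [a]).IsChain G.Adj := by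
        have : (k ++ [a]).IsChain (G ⊔ SimpleGraph.fromEdgeSet {s(u, v)}).Adj := h4.tail
        refine this.imp_of_mem_imp ?_
        intro x y hx hy hxy
        refine (hG x y hxy).resolve_left ?_
        intro he
        have : b' ∈ k ++ [a] := by
          have : b' ∈ s(x, y) := by rw [he]; simp
          rcases Sym2.mem_iff.1 this with rfl | rfl <;> assumption
        rw [List.cons_append, List.nodup_cons] at h1
        exact h1.1 this
      exact List.IsChain.append_overlap (l₁ := [b']) e1 e2 hk
    have hm : ∀ x, x ∈ l ↔ x ∈ b' :: k ++ [a] := fun x => hr.mem_iff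
    rcases Sym2.eq_iff.1 hs with ⟨rfl, rfl⟩ | ⟨rfl, rfl⟩
    · refine ⟨k.reverse, by simpa using hk, ?_, ?_, ?_⟩
      · rw [← List.nodup_reverse] at h1
        simpa using h1
      · have : (b' :: k ++ [a]).reverse.IsChain G.Adj := by
          rw [List.isChain_reverse]
          exact hc.imp fun _ _ h => h.symm
        simpa using this
      · intro x; rw [hm]; simp; tauto
    · exact ⟨k, hk, h1, hc, hm⟩

theorem ore_list {V : Type*} (G : SimpleGraph V) [DecidableRel G.Adj] (u v : V) (k : List V)
    (hk : k ≠ []) (hnd : (u :: k ++ [v]).Nodup) (hc : (u :: k ++ [v]).IsChain G.Adj)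
    (hcount : (u :: k ++ [v]).length ≤ (u :: k ++ [v]).countP (fun x => decide (G.Adj u x)) +
      (u :: k ++ [v]).countP (fun x => decide (G.Adj v x))) :
    ∃ l, CycL G l ∧ ∀ x, x ∈ u :: k ++ [v] ↔ x ∈ l := by
  rcases count_split (fun x => decide (G.Adj v x)) (fun x => decide (G.Adj u x)) (k ++ [v]) u with
    ⟨l1, a, b, l2, h, ha, hb⟩ | h
  · have hp : (u :: k ++ [v]).Perm ((l1 ++ [a] ++ l2.reverse) ++ [b]) := by
      rw [List.cons_append, h]
      have : (b :: l2).Perm (l2.reverse ++ [b]) := by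
        simpa using (List.reverse_perm (b :: l2)).symm
      simpa using (this.cons a).append_left l1
    refine ⟨(l1 ++ [a] ++ l2.reverse) ++ [b], ⟨?_, ?_, ?_⟩, fun x => hp.mem_iff⟩
    · exact hp.nodup_iff.1 hnd
    · rw [← hp.length_eq]
      have := List.length_pos_iff.2 hk
      simp; omega
    · have hlast : (b :: l2).getLast? = some v := by
        have h' : (u :: k) ++ [v] = (l1 ++ [a]) ++ (b :: l2) := by simpa using h
        have := congrArg List.getLast? h'
        rw [List.getLast?_concat, List.getLast?_append_of_ne_nil _ (by simp)] at this
        exact this.symm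
      have hhead : (l1 ++ [a]).head? = some u := by
        have := congrArg List.head? h
        cases l1 <;> simp_all
      simp at ha hb
      rw [List.cons_append, h] at hc
      have hc' : ((l1 ++ [a]) ++ (b :: l2)).IsChain G.Adj := by simpa using hc
      refine chain_close (b := u) ?_ ?_ hb.symm
      · have : (l1 ++ [a] ++ (b :: l2).reverse).IsChain G.Adj := by
          refine hc'.left_of_append.append ?_ ?_
          · rw [List.isChain_reverse]
            exact hc'.right_of_append.imp fun _ _ h => h.symm
          · intro x hx y hy
            rw [List.head?_reverse, hlast] at hy
            simp at hx hy
            subst hx hy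
            exact ha.symm
        simpa using this
      · cases l1 <;> simp_all
  · exfalso
    rw [← List.cons_append, List.dropLast_concat] at h
    simp [List.countP_cons] at h hcount
    omega

theorem merge_list {V : Type*} (G : SimpleGraph V) (u v : V) (k m : List V) (a b : V)
    (hnd : (u :: k ++ [v]).Nodup) (hc : (u :: k ++ [v]).IsChain G.Adj)
    (hnd' : (m ++ [a]).Nodup) (hc' : (m ++ [a]).IsChain G.Adj) (hb : (m ++ [a]).head? = some b)
    (hd : ∀ x ∈ u :: k ++ [v], x ∉ m ++ [a]) (ha : G.Adj u a) (hvb : G.Adj v b) :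
    CycL G ((u :: k ++ [v]) ++ (m ++ [a])) := by
  refine ⟨?_, ?_, ?_⟩
  · rw [List.nodup_append]
    refine ⟨hnd, hnd', ?_⟩
    rintro x hx y hy rfl
    exact hd x hx hy
  · simp; omega
  · rw [← List.append_assoc]
    refine chain_close (b := u) ?_ (by simp) ha.symm
    rw [List.append_assoc]
    refine hc.append hc' ?_
    intro x hx y hy
    rw [hb] at hy
    rw [List.getLast?_concat] at hx
    simp at hx hy
    subst hx hy
    exact hvb

theorem count_eq {V : Type*} [DecidableEq V] (A : V → Prop) [DecidablePred A] (p : Finset V)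
    (l : List V) (hl : l.Nodup) (h : ∀ x, x ∈ p ↔ x ∈ l) :
    (p.filter A).card = l.countP (fun x => decide (A x)) ∧ p.card = l.length := by
  obtain rfl : p = l.toFinset := by ext; simp [h]
  refine ⟨?_, List.toFinset_card_of_nodup hl⟩
  rw [List.countP_eq_length_filter, ← List.toFinset_card_of_nodup (hl.filter _)]
  congr 1
  ext; simp

theorem part_card {V : Type*} [Fintype V] [DecidableEq V] (P : Finset (Finset V))
    (hP : ∀ v : V, ∃! p, p ∈ P ∧ v ∈ p) (A : V → Prop) [DecidablePred A] :
    (Finset.univ.filter A).card = ∑ p ∈ P, (p.filter A).card := by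
  rw [← Finset.card_biUnion]
  · congr 1
    ext x
    obtain ⟨p, ⟨h1, h2⟩, _⟩ := hP x
    simp
    exact ⟨fun h => ⟨p, h1, h2, h⟩, fun ⟨_, _, _, h⟩ => h⟩
  · intro p hp q hq hpq
    refine Finset.disjoint_left.2 ?_
    intro x hx hx'
    simp at hx hx'
    exact hpq ((hP x).unique ⟨hp, hx.1⟩ ⟨hq, hx'.1⟩)

theorem stmt0 {V : Type*} [Fintype V] (G : SimpleGraph V) [DecidableRel G.Adj]
    (n r : ℕ) (hn : Fintype.card V = n) (hr : 0 < r)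
    (u v : V) (huv : u ≠ v) (hadj : ¬ G.Adj u v)
    (hdeg : n ≤ G.degree u + G.degree v)
    (h : HasCycleCoverLE (G ⊔ SimpleGraph.fromEdgeSet {s(u, v)}) r) :
    HasCycleCoverLE G r := by
  classical
  obtain ⟨P, hPr, hP, hpc⟩ := h
  -- list form of the pieces
  have hpc' : ∀ p ∈ P, (∃ x, p = {x}) ∨ (∃ l, CycL G l ∧ ∀ x, x ∈ p ↔ x ∈ l) ∨
      ∃ k, k ≠ [] ∧ (u :: k ++ [v]).Nodup ∧ (u :: k ++ [v]).IsChain G.Adj ∧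
      ∀ x, x ∈ p ↔ x ∈ u :: k ++ [v] := by
    intro p hp
    rcases hpc p hp with h | ⟨a, c, hc, hx⟩
    · exact Or.inl h
    · right
      obtain ⟨l, hl, hl'⟩ := cycL_of_walk c hc
      rcases piece_cases G u v l hl with h | ⟨k, h1, h2, h3, h4⟩
      · exact Or.inl ⟨l, h, fun x => (hx x).trans (hl' x)⟩
      · exact Or.inr ⟨k, h1, h2, h3, fun x => ((hx x).trans (hl' x)).trans (h4 x)⟩
  have fin : ∀ p : Finset V, (∃ l, CycL G l ∧ ∀ x, x ∈ p ↔ x ∈ l) →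
      ∃ a : V, ∃ c : G.Walk a a, c.IsCycle ∧ ∀ x, x ∈ p ↔ x ∈ c.support := by
    rintro p ⟨l, hl, hx⟩
    obtain ⟨a, c, hc, hc'⟩ := walk_of_cycL hl
    exact ⟨a, c, hc, fun x => (hx x).trans (hc' x)⟩
  by_cases hall : ∀ p ∈ P, (∃ x, p = {x}) ∨ (∃ l, CycL G l ∧ ∀ x, x ∈ p ↔ x ∈ l)
  · exact ⟨P, hPr, hP, fun p hp => (hall p hp).imp_right (fin p)⟩
  push Not at hall
  obtain ⟨p0, hp0, hns, hnc⟩ := hall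
  have hp0' : ∃ k, k ≠ [] ∧ (u :: k ++ [v]).Nodup ∧ (u :: k ++ [v]).IsChain G.Adj ∧
      ∀ x, x ∈ p0 ↔ x ∈ u :: k ++ [v] := by
    rcases hpc' p0 hp0 with ⟨x, hx⟩ | ⟨l, hl, hx⟩ | h
    · exact absurd hx (hns x)
    · obtain ⟨x, hx'⟩ := hnc l hl
      exact absurd (hx x) (by tauto)
    · exact h
  obtain ⟨k, hk, hnd, hch, hmem⟩ := hp0'
  have hu0 : u ∈ p0 := by simp [hmem]
  have hoth : ∀ p ∈ P, p ≠ p0 → (∃ x, p = {x}) ∨ (∃ l, CycL G l ∧ ∀ x, x ∈ p ↔ x ∈ l) := by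
    intro p hp hne
    rcases hpc' p hp with h | h | ⟨k', _, _, _, h⟩
    · exact Or.inl h
    · exact Or.inr h
    · exact absurd ((hP u).unique ⟨hp, by simp [h]⟩ ⟨hp0, hu0⟩) hne
  -- degree counting
  have hdu : G.degree u = ∑ p ∈ P, (p.filter (G.Adj u)).card := by
    rw [← part_card P hP, ← SimpleGraph.card_neighborFinset_eq_degree,
      SimpleGraph.neighborFinset_eq_filter]
  have hdv : G.degree v = ∑ p ∈ P, (p.filter (G.Adj v)).card := by
    rw [← part_card P hP, ← SimpleGraph.card_neighborFinset_eq_degree,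
      SimpleGraph.neighborFinset_eq_filter]
  have hnn : n = ∑ p ∈ P, p.card := by
    have := part_card P hP (fun _ => True)
    simpa [hn] using this
  have hsmall : (p0.filter (G.Adj u)).card + (p0.filter (G.Adj v)).card < p0.card := by
    by_contra hcon
    push Not at hcon
    rw [(count_eq (G.Adj u) p0 _ hnd hmem).1, (count_eq (G.Adj v) p0 _ hnd hmem).1,
      (count_eq (G.Adj v) p0 _ hnd hmem).2] at hcon
    obtain ⟨l, hl, hx⟩ := ore_list G u v k hk hnd hch hcon
    obtain ⟨x, hx'⟩ := hnc l hl
    have := (hmem x).trans (hx x)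
    tauto
  obtain ⟨p, hp, hne, hbig⟩ : ∃ p ∈ P, p ≠ p0 ∧
      p.card < (p.filter (G.Adj u)).card + (p.filter (G.Adj v)).card := by
    by_contra hcon
    push Not at hcon
    have : ∑ p ∈ P, ((p.filter (G.Adj u)).card + (p.filter (G.Adj v)).card) < ∑ p ∈ P, p.card := by
      refine Finset.sum_lt_sum ?_ ⟨p0, hp0, hsmall⟩
      intro p hp
      by_cases h : p = p0
      · subst h; exact hsmall.le
      · exact hcon p hp h
    rw [Finset.sum_add_distrib] at this
    omega
  -- the linear arrangement of p
  have hlin : ∃ m a b, (m ++ [a]).Nodup ∧ (m ++ [a]).IsChain G.Adj ∧ (m ++ [a]).head? = some b ∧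
      G.Adj u a ∧ G.Adj v b ∧ ∀ x, x ∈ p ↔ x ∈ m ++ [a] := by
    rcases hoth p hp hne with ⟨x, rfl⟩ | ⟨l, hl, hx⟩
    · have h1 : G.Adj u x ∧ G.Adj v x := by
        simp [Finset.filter_singleton] at hbig
        by_cases h1 : G.Adj u x <;> by_cases h2 : G.Adj v x <;> simp [h1, h2] at hbig ⊢
      exact ⟨[], x, x, by simp, by simp, by simp, h1.1, h1.2, by simp⟩
    · rw [(count_eq (G.Adj u) p _ hl.1 hx).1, (count_eq (G.Adj v) p _ hl.1 hx).1,
        (count_eq (G.Adj v) p _ hl.1 hx).2] at hbig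
      obtain ⟨m, a, b, h1, h2, h3, h4⟩ := cyc_count _ _ l hbig
      have h5 := hl.2.2
      rw [Cycle.coe_eq_coe.2 h1] at h5
      exact ⟨m, a, b, h1.nodup_iff.1 hl.1, (chain_lin h5 h2).1, h2, by simpa using h3,
        by simpa using h4, fun x => (hx x).trans h1.mem_iff⟩
  obtain ⟨m, a, b, hnd', hch', hb, hua, hvb, hmem'⟩ := hlin
  have hcyc := merge_list G u v k m a b hnd hch hnd' hch' hb (by
    intro x hx hx'
    exact hne ((hP x).unique ⟨hp, (hmem' x).2 hx'⟩ ⟨hp0, (hmem x).2 hx⟩)) hua hvb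
  refine ⟨insert (p0 ∪ p) ((P.erase p0).erase p), ?_, ?_, ?_⟩
  · have h1 := Finset.card_insert_le (p0 ∪ p) ((P.erase p0).erase p)
    have h2 : ((P.erase p0).erase p).card ≤ (P.erase p0).card := Finset.card_erase_le
    have h3 := Finset.card_erase_add_one hp0
    omega
  · intro x
    obtain ⟨q, ⟨hq, hxq⟩, huniq⟩ := hP x
    by_cases hx : x ∈ p0 ∪ p
    · refine ⟨p0 ∪ p, ⟨by simp, hx⟩, ?_⟩
      rintro y ⟨hy, hxy⟩
      simp only [Finset.mem_insert, Finset.mem_erase] at hy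
      rcases hy with rfl | ⟨hy1, hy2, hy3⟩
      · rfl
      · exfalso
        have e1 := huniq y ⟨hy3, hxy⟩
        rcases Finset.mem_union.1 hx with h | h
        · exact hy2 (e1.trans (huniq p0 ⟨hp0, h⟩).symm)
        · exact hy1 (e1.trans (huniq p ⟨hp, h⟩).symm)
    · have hx' : x ∉ p0 ∧ x ∉ p := by simpa using hx
      refine ⟨q, ⟨?_, hxq⟩, ?_⟩
      · simp only [Finset.mem_insert, Finset.mem_erase]
        right
        refine ⟨?_, ?_, hq⟩
        · rintro rfl; exact hx'.2 hxq
        · rintro rfl; exact hx'.1 hxq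
      · rintro y ⟨hy, hxy⟩
        simp only [Finset.mem_insert, Finset.mem_erase] at hy
        rcases hy with rfl | ⟨hy1, hy2, hy3⟩
        · exact absurd hxy hx
        · exact huniq y ⟨hy3, hxy⟩
  · intro q hq
    simp only [Finset.mem_insert, Finset.mem_erase] at hq
    rcases hq with rfl | ⟨hy1, hy2, hy3⟩
    · right
      refine fin _ ⟨_, hcyc, ?_⟩
      intro x
      rw [Finset.mem_union, hmem, hmem', ← List.mem_append]
    · exact (hoth q hy3 hy2).imp_right (fin q)
end

section
/- Let G be a simple graph on n vertices and let r be a positive integer. Suppose G_0 = G, G_1, ..., G_t is a sequence of graphs on the same vertex set such that for each i < t the graph G_{i+1} equals G_i + u_i v_i for some pair of distinct vertices u_i, v_i that are nonadjacent in G_i and satisfy deg_{G_i}(u_i) + deg_{G_i}(v_i) ≥ n. Then G has a cycle cover of size at most r if and only if G_t has a cycle cover of size at most r. -/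
def CCL {V : Type*} (G : SimpleGraph V) (p : Finset V) : Prop :=
  ∃ l : List V, l.Nodup ∧ (∀ x, x ∈ p ↔ x ∈ l) ∧
    ((∃ x, l = [x]) ∨ (3 ≤ l.length ∧ Cycle.Chain G.Adj (l : Cycle V)))

theorem ccl_closing {V : Type*} {R : V → V → Prop} (l : List V) (hl : l ≠ [])
    (h : l.IsChain R) (hr : R (l.getLast hl) (l.head hl)) : Cycle.Chain R (l : Cycle V) := by
  rw [Cycle.chain_ne_nil R hl]
  cases l with
  | nil => exact absurd rfl hl
  | cons a l => exact List.isChain_cons_cons.2 ⟨hr, h⟩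

theorem ccl_iff {V : Type*} (G : SimpleGraph V) (p : Finset V) :
    CCL G p ↔ ((∃ x, p = {x}) ∨
      ∃ a : V, ∃ c : G.Walk a a, c.IsCycle ∧ ∀ x, x ∈ p ↔ x ∈ c.support) := by
  constructor
  · rintro ⟨l, hnd, hm, ⟨x, rfl⟩ | ⟨h3, hc⟩⟩
    · left
      refine ⟨x, ?_⟩
      ext y
      simp [hm]
    · right
      have hl : l ≠ [] := by rintro rfl; simp at h3
      rw [Cycle.chain_ne_nil _ hl] at hc
      have hch : l.IsChain G.Adj := hc.tail
      have hadj : G.Adj (l.getLast hl) (l.head hl) := by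
        cases l with
        | nil => exact absurd rfl hl
        | cons a l => exact (List.isChain_cons_cons.1 hc).1
      refine ⟨_, .cons hadj (.ofSupport l hl hch), ?_, ?_⟩
      · rw [SimpleGraph.Walk.cons_isCycle_iff]
        have hp : (SimpleGraph.Walk.ofSupport l hl hch).IsPath := by
          rw [SimpleGraph.Walk.isPath_def, SimpleGraph.Walk.support_ofSupport]; exact hnd
        refine ⟨hp, fun he => ?_⟩
        rw [Sym2.eq_swap] at he
        have := hp.length_eq_one_of_mem_edges he
        rw [SimpleGraph.Walk.length_ofSupport] at this
        omega
      · intro x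
        rw [SimpleGraph.Walk.support_cons, SimpleGraph.Walk.support_ofSupport, hm]
        simp only [List.mem_cons]
        constructor
        · exact Or.inr
        · rintro (rfl | h)
          · exact List.getLast_mem hl
          · exact h
  · rintro (⟨x, rfl⟩ | ⟨a, c, hc, hm⟩)
    · exact ⟨[x], by simp, by simp, Or.inl ⟨x, rfl⟩⟩
    · have h3 := hc.three_le_length
      have hn := hc.support_nodup
      have hch := c.isChain_adj_support
      cases c with
      | nil => simp at h3
      | cons h q =>
        simp only [SimpleGraph.Walk.support_cons, List.tail_cons, SimpleGraph.Walk.length_cons] at *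
        refine ⟨q.support, hn, ?_, Or.inr ⟨by simpa using h3, ?_⟩⟩
        · intro x
          rw [hm, List.mem_cons]
          constructor
          · rintro (rfl | h)
            · exact q.end_mem_support
            · exact h
          · exact Or.inr
        · refine ccl_closing _ q.support_ne_nil hch.tail ?_
          simpa using h

theorem ccl_exists_bad {V : Type*} {S : V → V → Prop} (l : List V) (h : ¬ l.IsChain S) :
    ∃ A x y B, l = A ++ x :: y :: B ∧ ¬ S x y := by
  induction l with
  | nil => simp at h
  | cons a l ih =>
    by_cases hl : l.IsChain S
    · cases l with
      | nil => simp at h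
      | cons b l =>
        refine ⟨[], a, b, l, rfl, fun hab => h (List.isChain_cons_cons.2 ⟨hab, hl⟩)⟩
    · obtain ⟨A, x, y, B, rfl, hs⟩ := ih hl
      exact ⟨a :: A, x, y, B, rfl, hs⟩

theorem ccl_rot_bad {V : Type*} {S : V → V → Prop} (l : List V) (h2 : 2 ≤ l.length)
    (h : ¬ Cycle.Chain S (l : Cycle V)) :
    ∃ x y B, (y :: (B ++ [x])).IsRotated l ∧ ¬ S x y := by
  cases l with
  | nil => simp at h2
  | cons a C =>
    rw [Cycle.chain_coe_cons] at h
    obtain ⟨A, x, y, B, he, hs⟩ := ccl_exists_bad _ h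
    rcases List.eq_nil_or_concat' B with rfl | ⟨B', b, rfl⟩
    · have h1 : (a :: C) ++ [a] = (A ++ [x]) ++ [y] := by simpa using he
      obtain ⟨h3, h4⟩ := List.append_inj' h1 rfl
      simp at h4
      subst h4
      cases A with
      | nil => simp at h3; simp [h3] at h2
      | cons a' A =>
        simp at h3
        refine ⟨x, a, A, ?_, hs⟩
        rw [h3.2]
    · have h1 : (a :: C) ++ [a] = (A ++ x :: y :: B') ++ [b] := by simpa using he
      obtain ⟨h3, h4⟩ := List.append_inj' h1 rfl
      refine ⟨x, y, B' ++ A, ?_, hs⟩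
      rw [h3]
      have := List.isRotated_append (l := y :: B') (l' := A ++ [x])
      simpa using this

theorem ccl_mono {V : Type*} {G H : SimpleGraph V} (h : G ≤ H) {p : Finset V} (hp : CCL G p) :
    CCL H p := by
  obtain ⟨l, h1, h2, h3⟩ := hp
  refine ⟨l, h1, h2, h3.imp_right fun h4 => ⟨h4.1, h4.2.imp fun a b hab => h hab⟩⟩

/-- Parts avoiding `u` survive. -/
theorem ccl_avoid {V : Type*} {G : SimpleGraph V} {u v : V} {p : Finset V} (hu : u ∉ p)
    (hp : CCL (G ⊔ SimpleGraph.fromEdgeSet {s(u, v)}) p) : CCL G p := by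
  obtain ⟨l, h1, h2, h3⟩ := hp
  refine ⟨l, h1, h2, h3.imp_right fun h4 => ⟨h4.1, ?_⟩⟩
  have hl : l ≠ [] := by rintro rfl; simp at h4
  have h5 := h4.2
  rw [Cycle.chain_ne_nil _ hl] at h5 ⊢
  refine h5.imp_of_mem_imp fun a b ha hb hab => ?_
  have hmem : ∀ a, a ∈ l.getLast hl :: l → a ≠ u := by
    rintro a ha rfl
    apply hu
    rw [h2]
    rcases List.mem_cons.1 ha with h | h
    · rw [h]; exact List.getLast_mem hl
    · exact h
  have := hmem a ha
  have := hmem b hb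
  simp only [SimpleGraph.sup_adj, SimpleGraph.fromEdgeSet_adj, Set.mem_singleton_iff,
    Sym2.eq_iff] at hab
  tauto

/-- A broken part gives a spanning path of the part in `G`. -/
theorem ccl_broken {V : Type*} {G : SimpleGraph V} {u v : V} {p : Finset V}
    (hp : CCL (G ⊔ SimpleGraph.fromEdgeSet {s(u, v)}) p) (hn : ¬ CCL G p) :
    ∃ a b t, ((a = u ∧ b = v) ∨ (a = v ∧ b = u)) ∧ t ≠ [] ∧ (a :: (t ++ [b])).Nodup ∧
      (a :: (t ++ [b])).IsChain G.Adj ∧ ∀ x, x ∈ p ↔ x ∈ (a :: (t ++ [b])) := by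
  obtain ⟨l, h1, h2, h3⟩ := hp
  rcases h3 with h3 | ⟨h3, h4⟩
  · exact absurd ⟨l, h1, h2, Or.inl h3⟩ hn
  have h5 : ¬ Cycle.Chain G.Adj (l : Cycle V) := fun h => hn ⟨l, h1, h2, Or.inr ⟨h3, h⟩⟩
  obtain ⟨x, y, B, hr, hs⟩ := ccl_rot_bad l (by omega) h5
  have hnd : (y :: (B ++ [x])).Nodup := hr.nodup_iff.2 h1
  have hlen : 3 ≤ (y :: (B ++ [x])).length := by rw [hr.perm.length_eq]; exact h3
  have hB : B ≠ [] := by rintro rfl; simp at hlen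
  have hch : Cycle.Chain (G ⊔ SimpleGraph.fromEdgeSet {s(u, v)}).Adj
      ((y :: (B ++ [x]) : List V) : Cycle V) := by
    rw [Cycle.coe_eq_coe.2 hr]; exact h4
  rw [Cycle.chain_ne_nil _ (by simp)] at hch
  have hxy := (List.isChain_cons_cons.1 hch).1
  have hch' := (List.isChain_cons_cons.1 hch).2
  have hxy' : (y = u ∧ x = v) ∨ (y = v ∧ x = u) := by
    have e : (y :: (B ++ [x])).getLast (by simp) = x := by simp
    rw [e] at hxy
    simp only [SimpleGraph.sup_adj, SimpleGraph.fromEdgeSet_adj, Set.mem_singleton_iff,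
      Sym2.eq_iff] at hxy
    tauto
  have key : ∀ a b, (G ⊔ SimpleGraph.fromEdgeSet {s(u, v)}).Adj a b →
      (¬ (a = x ∨ b = x) ∨ ¬ (a = y ∨ b = y)) → G.Adj a b := by
    intro a b hab hh
    simp only [SimpleGraph.sup_adj, SimpleGraph.fromEdgeSet_adj, Set.mem_singleton_iff,
      Sym2.eq_iff] at hab
    rcases hxy' with ⟨rfl, rfl⟩ | ⟨rfl, rfl⟩ <;> tauto
  refine ⟨y, x, B, hxy', hB, hnd, ?_, fun z => by rw [h2, hr.mem_iff]⟩
  have c1 : ([y] ++ B).IsChain G.Adj := by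
    have : ([y] ++ B).IsChain (G ⊔ SimpleGraph.fromEdgeSet {s(u, v)}).Adj := by
      have : (([y] ++ B) ++ [x]).IsChain (G ⊔ SimpleGraph.fromEdgeSet {s(u, v)}).Adj := by
        simpa using hch'
      exact this.left_of_append
    refine this.imp_of_mem_imp fun a b ha hb hab => key a b hab (Or.inl ?_)
    have hx : x ∉ [y] ++ B := by
      intro hx
      have : ([y] ++ B ++ [x]).Nodup := by simpa using hnd
      exact (List.nodup_append.1 this).2.2 x hx x (by simp) rfl
    rintro (rfl | rfl) <;> contradiction
  have c2 : (B ++ [x]).IsChain G.Adj := by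
    refine hch'.tail.imp_of_mem_imp fun a b ha hb hab => key a b hab (Or.inr ?_)
    have hy := (List.nodup_cons.1 hnd).1
    have ha : _ ∈ B ++ [x] := ha
    have hb : _ ∈ B ++ [x] := hb
    rintro (rfl | rfl) <;> contradiction
  simpa using c1.append_overlap c2 hB

/-- successor permutation of an intact part -/
theorem ccl_succ {V : Type*} {G : SimpleGraph V} {p : Finset V} (hp : CCL G p) :
    ∃ σ : Equiv.Perm V, (∀ y ∈ p, σ y ∈ p) ∧ ∀ y ∈ p, ∃ Q : List V, ∃ hQ : Q ≠ [],
      Q.Nodup ∧ Q.IsChain G.Adj ∧ (∀ x, x ∈ p ↔ x ∈ Q) ∧ Q.head hQ = σ y ∧ Q.getLast hQ = y := by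
  classical
  obtain ⟨l, h1, h2, h3⟩ := hp
  refine ⟨l.formPerm, fun y hy => ?_, fun y hy => ?_⟩
  · rw [h2] at hy ⊢; exact l.formPerm_apply_mem_of_mem hy
  · rw [h2] at hy
    rcases h3 with ⟨x, rfl⟩ | ⟨h3, h4⟩
    · simp at hy
      subst hy
      exact ⟨[y], by simp, by simp, by simp, by simpa using h2, by simp, by simp⟩
    obtain ⟨A, B, rfl⟩ := List.append_of_mem hy
    have hr : (A ++ y :: B).IsRotated (y :: (B ++ A)) := by
      simpa using List.isRotated_append (l := A) (l' := y :: B)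
    rw [List.formPerm_eq_of_isRotated h1 hr]
    rw [Cycle.coe_eq_coe.2 hr] at h4
    have hlen : 3 ≤ (y :: (B ++ A)).length := by rw [← hr.perm.length_eq]; exact h3
    have hnd := hr.nodup_iff.1 h1
    have hm : ∀ x, x ∈ p ↔ x ∈ y :: (B ++ A) := fun x => by rw [h2, hr.mem_iff]
    generalize B ++ A = D at *
    cases D with
    | nil => simp at hlen
    | cons z D =>
      refine ⟨z :: (D ++ [y]), by simp, ?_, ?_, ?_, ?_, by simp⟩
      · have : (z :: D ++ [y]).Perm (y :: z :: D) := List.perm_append_comm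
        exact this.nodup_iff.2 hnd
      · rw [Cycle.chain_coe_cons] at h4
        exact h4.tail
      · intro x; rw [hm]; simp; tauto
      · rw [List.formPerm_apply_head _ _ _ hnd]; rfl

/-- successor permutation of the broken part -/
theorem ccl_succ0 {V : Type*} {G : SimpleGraph V} {p : Finset V} {u v : V} {t : List V}
    (hnd : (u :: (t ++ [v])).Nodup) (ht : t ≠ []) (hch : (u :: (t ++ [v])).IsChain G.Adj)
    (hm : ∀ x, x ∈ p ↔ x ∈ (u :: (t ++ [v]))) :
    ∃ σ : Equiv.Perm V, (∀ y ∈ p, σ y ∈ p) ∧ σ v = u ∧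
      ∀ y ∈ p, y ≠ v → G.Adj u (σ y) → G.Adj v y → CCL G p := by
  classical
  refine ⟨(u :: (t ++ [v])).formPerm, fun y hy => ?_, by simp, fun y hy hyv hu hv => ?_⟩
  · rw [hm] at hy ⊢; exact List.formPerm_apply_mem_of_mem hy
  · rw [hm] at hy
    have hlen : 3 ≤ (u :: (t ++ [v])).length := by
      have := List.length_pos_iff.2 ht
      simp; omega
    have hlast : (u :: (t ++ [v])).getLast? = some v := by
      rw [← List.cons_append, List.getLast?_concat]
    have hhead : (u :: (t ++ [v])).head? = some u := by simp
    generalize (u :: (t ++ [v])) = l at *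
    obtain ⟨A, B, rfl⟩ := List.append_of_mem hy
    cases B with
    | nil => simp at hlast; exact absurd hlast hyv
    | cons z B =>
      have hr : (A ++ y :: z :: B).IsRotated (y :: z :: (B ++ A)) := by
        simpa using List.isRotated_append (l := A) (l' := y :: z :: B)
      rw [List.formPerm_eq_of_isRotated hnd hr,
        List.formPerm_apply_head _ _ _ (hr.nodup_iff.1 hnd)] at hu
      have hperm : ((A ++ [y]) ++ (z :: B).reverse).Perm (A ++ y :: z :: B) := by
        have : A ++ y :: z :: B = (A ++ [y]) ++ (z :: B) := by simp
        rw [this]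
        exact (List.reverse_perm _).append_left _
      refine ⟨(A ++ [y]) ++ (z :: B).reverse, hperm.nodup_iff.2 hnd,
        fun x => by rw [hm, hperm.mem_iff], Or.inr ⟨by rw [hperm.length_eq]; exact hlen, ?_⟩⟩
      have hspl := List.isChain_append_cons_cons.1 hch
      refine ccl_closing _ (by simp) ?_ ?_
      · rw [List.isChain_append]
        refine ⟨hspl.1, ?_, ?_⟩
        · rw [List.isChain_reverse]
          exact hspl.2.2.imp fun a b h => h.symm
        · intro a ha b hb
          have e1 : y = a := by simpa using ha
          have e2 : (z :: B).getLast? = some b := by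
            rw [List.head?_reverse] at hb; exact hb
          have e3 : (z :: B).getLast? = some v := by
            rw [← hlast, List.getLast?_append_of_ne_nil _ (by simp), List.getLast?_cons_cons]
          rw [e3] at e2
          cases e2
          subst e1
          exact hv.symm
      · have e1 : ((A ++ [y]) ++ (z :: B).reverse).head (by simp) = u := by
          cases A <;> simpa using hhead
        rw [e1]
        simpa using hu.symm

theorem ccl_merge {V : Type*} [DecidableEq V] {G : SimpleGraph V} {p q : Finset V} {u v y z : V}
    {t Q : List V}
    (hnd : (u :: (t ++ [v])).Nodup) (ht : t ≠ []) (hch : (u :: (t ++ [v])).IsChain G.Adj)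
    (hm : ∀ x, x ∈ p ↔ x ∈ (u :: (t ++ [v])))
    (hQ : Q ≠ []) (hQn : Q.Nodup) (hQc : Q.IsChain G.Adj) (hQm : ∀ x, x ∈ q ↔ x ∈ Q)
    (hz : Q.head hQ = z) (hy : Q.getLast hQ = y) (hd : Disjoint p q)
    (huz : G.Adj u z) (hvy : G.Adj v y) : CCL G (p ∪ q) := by
  refine ⟨(u :: (t ++ [v])) ++ Q.reverse, ?_, ?_, Or.inr ⟨?_, ?_⟩⟩
  · rw [List.nodup_append]
    refine ⟨hnd, by simpa using hQn, ?_⟩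
    rintro a ha b hb rfl
    rw [List.mem_reverse, ← hQm] at hb
    rw [← hm] at ha
    exact Finset.disjoint_left.1 hd ha hb
  · intro x
    rw [Finset.mem_union, List.mem_append, List.mem_reverse, hm, hQm]
  · have := List.length_pos_iff.2 ht
    simp; omega
  · refine ccl_closing _ (by simp) ?_ ?_
    · rw [List.isChain_append]
      refine ⟨hch, ?_, ?_⟩
      · rw [List.isChain_reverse]
        exact hQc.imp fun a b h => h.symm
      · intro a ha b hb
        have e1 : v = a := by
          rw [← List.cons_append, List.getLast?_concat] at ha
          simpa using ha
        rw [List.head?_reverse, List.getLast?_eq_getLast_of_ne_nil hQ, hy] at hb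
        cases hb
        subst e1
        exact hvy
    · have : ((u :: (t ++ [v])) ++ Q.reverse).getLast (by simp) = z := by
        rw [List.getLast_append_of_ne_nil _ (by simpa using hQ), List.getLast_reverse, hz]
      rw [this]
      exact huz.symm

theorem ccl_core {V : Type*} [Fintype V] [DecidableEq V] {G : SimpleGraph V} {r : ℕ} {u v : V}
    (huv : ¬ G.Adj u v)
    (hdeg : Fintype.card V ≤ (G.neighborSet u).ncard + (G.neighborSet v).ncard)
    (P : Finset (Finset V)) (hcard : P.card ≤ r) (hP : ∀ v : V, ∃! p, p ∈ P ∧ v ∈ p)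
    (p0 : Finset V) (hp0 : p0 ∈ P) (hrest : ∀ p ∈ P, p ≠ p0 → CCL G p) (t : List V)
    (hnd : (u :: (t ++ [v])).Nodup) (ht : t ≠ []) (hch : (u :: (t ++ [v])).IsChain G.Adj)
    (hm : ∀ x, x ∈ p0 ↔ x ∈ (u :: (t ++ [v]))) :
    ∃ P : Finset (Finset V), P.card ≤ r ∧ (∀ v : V, ∃! p, p ∈ P ∧ v ∈ p) ∧ ∀ p ∈ P, CCL G p := by
  obtain ⟨σ0, hσ0, hσ0v, hσ0c⟩ := ccl_succ0 hnd ht hch hm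
  have hs : ∀ p : Finset V, ∃ σ : Equiv.Perm V, p ∈ P → p ≠ p0 →
      ((∀ y ∈ p, σ y ∈ p) ∧ ∀ y ∈ p, ∃ Q : List V, ∃ hQ : Q ≠ [],
      Q.Nodup ∧ Q.IsChain G.Adj ∧ (∀ x, x ∈ p ↔ x ∈ Q) ∧ Q.head hQ = σ y ∧
        Q.getLast hQ = y) := by
    intro p
    by_cases h : p ∈ P ∧ p ≠ p0
    · obtain ⟨σ, hσ⟩ := ccl_succ (hrest p h.1 h.2)
      exact ⟨σ, fun _ _ => hσ⟩
    · exact ⟨1, fun h1 h2 => absurd ⟨h1, h2⟩ h⟩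
  choose σ hσ using hs
  choose pt hpt hptu using hP
  simp only at hpt hptu
  have hptu' : ∀ x p, p ∈ P → x ∈ p → pt x = p := fun x p h1 h2 => (hptu x p ⟨h1, h2⟩).symm
  let τ : Finset V → Equiv.Perm V := fun p => if p = p0 then σ0 else σ p
  have hτ : ∀ p ∈ P, ∀ y ∈ p, τ p y ∈ p := by
    intro p hp y hy
    by_cases h : p = p0
    · subst h; simp only [τ, if_true]; exact hσ0 y hy
    · simp only [τ, if_neg h]; exact (hσ p hp h).1 y hy
  let f : V → V := fun y => τ (pt y) y
  have hfpt : ∀ y, pt (f y) = pt y := fun y =>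
    hptu' _ _ (hpt y).1 (hτ _ (hpt y).1 y (hpt y).2)
  have hfinj : Function.Injective f := by
    intro a b hab
    have h1 : pt a = pt b := by rw [← hfpt a, ← hfpt b, hab]
    simp only [f, h1] at hab
    exact (τ (pt b)).injective hab
  have hfsurj := Finite.surjective_of_injective hfinj
  have hv0 : pt v = p0 := hptu' v p0 hp0 ((hm v).2 (by simp))
  have hfv : f v = u := by simp [f, hv0, τ, hσ0v]
  have hcnt : (f ⁻¹' (G.neighborSet u)).ncard = (G.neighborSet u).ncard :=
    Set.ncard_preimage_of_injective_subset_range hfinj (by rw [hfsurj.range_eq]; simp)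
  obtain ⟨y, hy1, hy2⟩ : ∃ y, G.Adj u (f y) ∧ G.Adj v y := by
    by_contra! hcon
    have hdis : Disjoint (f ⁻¹' (G.neighborSet u)) (G.neighborSet v) := by
      rw [Set.disjoint_left]
      intro y h1 h2
      exact hcon y h1 h2
    have h1 := Set.ncard_union_eq hdis (Set.toFinite _) (Set.toFinite _)
    have h2 : (f ⁻¹' (G.neighborSet u) ∪ G.neighborSet v).ncard < Fintype.card V := by
      rw [← Nat.card_eq_fintype_card, ← Set.ncard_univ]
      refine Set.ncard_lt_ncard ?_ (Set.toFinite _)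
      rw [Set.ssubset_univ_iff, Set.ne_univ_iff_exists_notMem]
      refine ⟨v, ?_⟩
      simp [hfv]
    omega
  have hyv : y ≠ v := by rintro rfl; exact G.loopless.irrefl _ hy2
  by_cases hy0 : pt y = p0
  · refine ⟨P, hcard, fun x => ⟨pt x, hpt x, hptu x⟩, fun p hp => ?_⟩
    by_cases h : p = p0
    · subst h
      refine hσ0c y (hy0 ▸ (hpt y).2) hyv ?_ hy2
      simpa [f, hy0, τ] using hy1
    · exact hrest p hp h
  · have hd : Disjoint p0 (pt y) := by
      rw [Finset.disjoint_left]
      intro x h1 h2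
      exact hy0 ((hptu' x _ (hpt y).1 h2).symm.trans (hptu' x _ hp0 h1))
    obtain ⟨Q, hQ, hQn, hQc, hQm, hQh, hQl⟩ := (hσ _ (hpt y).1 hy0).2 y (hpt y).2
    have hyf : f y = σ (pt y) y := by simp [f, τ, hy0]
    rw [hyf] at hy1
    have hc := ccl_merge hnd ht hch hm hQ hQn hQc hQm hQh hQl hd hy1 hy2
    refine ⟨insert (p0 ∪ pt y) ((P.erase p0).erase (pt y)), ?_, ?_, ?_⟩
    · have h1 := Finset.card_insert_le (p0 ∪ pt y) ((P.erase p0).erase (pt y))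
      have h2 := Finset.card_erase_lt_of_mem
        (Finset.mem_erase.2 ⟨hy0, (hpt y).1⟩ : pt y ∈ P.erase p0)
      have h3 := Finset.card_erase_le (s := P) (a := p0)
      omega
    · intro x
      by_cases hx : x ∈ p0 ∪ pt y
      · refine ⟨p0 ∪ pt y, ⟨Finset.mem_insert_self _ _, hx⟩, ?_⟩
        rintro q ⟨hq, hxq⟩
        rcases Finset.mem_insert.1 hq with rfl | hq
        · rfl
        · exfalso
          simp only [Finset.mem_erase] at hq
          have e := hptu' x q hq.2.2 hxq
          rcases Finset.mem_union.1 hx with h | h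
          · exact hq.2.1 (e.symm.trans (hptu' x _ hp0 h))
          · exact hq.1 (e.symm.trans (hptu' x _ (hpt y).1 h))
      · refine ⟨pt x, ⟨Finset.mem_insert_of_mem ?_, (hpt x).2⟩, ?_⟩
        · simp only [Finset.mem_erase]
          refine ⟨fun h => hx ?_, fun h => hx ?_, (hpt x).1⟩
          · exact Finset.mem_union_right _ (h ▸ (hpt x).2)
          · exact Finset.mem_union_left _ (h ▸ (hpt x).2)
        · rintro q ⟨hq, hxq⟩
          rcases Finset.mem_insert.1 hq with rfl | hq
          · exact absurd hxq hx
          · simp only [Finset.mem_erase] at hq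
            exact (hptu' x q hq.2.2 hxq).symm
    · intro p hp
      rcases Finset.mem_insert.1 hp with rfl | hp
      · exact hc
      · simp only [Finset.mem_erase] at hp
        exact hrest p hp.2.2 hp.2.1

theorem ccl_step {V : Type*} [Fintype V] {G : SimpleGraph V} {r : ℕ} {u v : V}
    (huv : ¬ G.Adj u v)
    (hdeg : Fintype.card V ≤ (G.neighborSet u).ncard + (G.neighborSet v).ncard) :
    HasCycleCoverLE G r ↔ HasCycleCoverLE (G ⊔ SimpleGraph.fromEdgeSet {s(u, v)}) r := by
  classical
  simp only [HasCycleCoverLE, ← ccl_iff]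
  constructor
  · rintro ⟨P, h1, h2, h3⟩
    exact ⟨P, h1, h2, fun p hp => ccl_mono le_sup_left (h3 p hp)⟩
  · rintro ⟨P, h1, h2, h3⟩
    by_cases h : ∀ p ∈ P, CCL G p
    · exact ⟨P, h1, h2, h⟩
    · push Not at h
      obtain ⟨p0, hp0, hb⟩ := h
      obtain ⟨a, b, t, hab, ht, hnd, hch, hm⟩ := ccl_broken (h3 p0 hp0) hb
      have hu : u ∈ p0 := by
        rw [hm]; rcases hab with ⟨rfl, rfl⟩ | ⟨rfl, rfl⟩ <;> simp
      have hrest : ∀ p ∈ P, p ≠ p0 → CCL G p := by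
        intro p hp hne
        refine ccl_avoid (fun hup => hne ?_) (h3 p hp)
        exact (h2 u).unique ⟨hp, hup⟩ ⟨hp0, hu⟩
      rcases hab with ⟨rfl, rfl⟩ | ⟨rfl, rfl⟩
      · exact ccl_core huv hdeg P h1 h2 p0 hp0 hrest t hnd ht hch hm
      · exact ccl_core (fun h => huv h.symm) (by omega) P h1 h2 p0 hp0 hrest t hnd ht hch hm

theorem stmt1 {V : Type*} [Fintype V] (n r t : ℕ)
    (hn : Fintype.card V = n) (hr : 0 < r)
    (Gs : ℕ → SimpleGraph V)
    (hstep : ∀ i < t, ∃ u v : V, u ≠ v ∧ ¬ (Gs i).Adj u v ∧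
      n ≤ ((Gs i).neighborSet u).ncard + ((Gs i).neighborSet v).ncard ∧
      Gs (i + 1) = Gs i ⊔ SimpleGraph.fromEdgeSet {s(u, v)}) :
    HasCycleCoverLE (Gs 0) r ↔ HasCycleCoverLE (Gs t) r := by
  induction t with
  | zero => rfl
  | succ k ih =>
    rw [ih fun i hi => hstep i (by omega)]
    obtain ⟨u, v, _, huv, hdeg, he⟩ := hstep k (by omega)
    rw [he]
    exact ccl_step huv (by omega)
end

section
/- Let G be a simple graph and let P = v_1, v_2, ..., v_h be a simple path in G with h ≥ 3. If there exists an index q with 2 < q < h such that v_1 v_q ∈ E(G) and v_{q-1} v_h ∈ E(G), then G contains a cycle whose vertex set is exactly {v_1, v_2, ..., v_h}. -/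
theorem walk_of_seq {V : Type*} (G : SimpleGraph V) (w : ℕ → V) (n : ℕ)
    (hw : ∀ i < n, G.Adj (w i) (w (i + 1))) :
    ∃ p : G.Walk (w 0) (w n), p.support = (List.range (n + 1)).map w := by
  induction n with
  | zero => exact ⟨SimpleGraph.Walk.nil, by simp⟩
  | succ n ih =>
    obtain ⟨p, hp⟩ := ih (fun i hi => hw i (by omega))
    refine ⟨p.concat (hw n (by omega)), ?_⟩
    rw [SimpleGraph.Walk.support_concat, hp, List.range_succ (n := n + 1)]
    simp

/-- Let `P = v 1, v 2, ..., v h` be a simple path in `G` with `h ≥ 3` (vertices pairwise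
distinct, consecutive vertices adjacent). If there is an index `q` with `2 < q < h` such that
`v 1` is adjacent to `v q` and `v (q-1)` is adjacent to `v h`, then `G` contains a cycle whose
vertex set is exactly `{v 1, ..., v h}`. -/
theorem stmt2 {V : Type*} (G : SimpleGraph V) (h : ℕ) (hh : 3 ≤ h) (v : ℕ → V)
    (hinj : ∀ i j, 1 ≤ i → i ≤ h → 1 ≤ j → j ≤ h → v i = v j → i = j)
    (hadj : ∀ i, 1 ≤ i → i < h → G.Adj (v i) (v (i + 1)))
    (q : ℕ) (hq1 : 2 < q) (hq2 : q < h)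
    (h1q : G.Adj (v 1) (v q)) (hqh : G.Adj (v (q - 1)) (v h)) :
    ∃ (a : V) (c : G.Walk a a), c.IsCycle ∧
      ∀ x, x ∈ c.support ↔ ∃ i, 1 ≤ i ∧ i ≤ h ∧ x = v i := by
  obtain ⟨w, hw⟩ : ∃ w : ℕ → V, w = fun i => if i < q - 1 then v (i + 1) else v (h + (q - 1) - i) :=
    ⟨_, rfl⟩
  have hlt : ∀ i, i < q - 1 → w i = v (i + 1) := fun i hi => by simp [hw, hi]
  have hge : ∀ i, q - 1 ≤ i → w i = v (h + (q - 1) - i) := fun i hi => by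
    simp [hw, Nat.not_lt.mpr hi]
  have hwadj : ∀ i < h - 1, G.Adj (w i) (w (i + 1)) := by
    intro i hi
    rcases lt_trichotomy (i + 1) (q - 1) with hc | hc | hc
    · rw [hlt i (by omega), hlt (i + 1) hc]
      exact hadj _ (by omega) (by omega)
    · rw [hlt i (by omega), hge (i + 1) (by omega), hc]
      simpa using hqh
    · rw [hge i (by omega), hge (i + 1) (by omega)]
      have := hadj (h + (q - 1) - (i + 1)) (by omega) (by omega)
      rw [show h + (q - 1) - (i + 1) + 1 = h + (q - 1) - i by omega] at this
      exact this.symm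
  obtain ⟨p, hp⟩ := walk_of_seq G w (h - 1) hwadj
  have hclose : G.Adj (w (h - 1)) (w 0) := by
    rw [hlt 0 (by omega), hge (h - 1) (by omega), show h + (q - 1) - (h - 1) = q by omega]
    exact h1q.symm
  have hlen : p.length = h - 1 := by
    have := congrArg List.length hp
    simpa using this
  have hmem : ∀ x, x ∈ p.support ↔ ∃ i, 1 ≤ i ∧ i ≤ h ∧ x = v i := by
    intro x
    rw [hp, List.mem_map]
    constructor
    · rintro ⟨i, hi, rfl⟩
      rw [List.mem_range] at hi
      by_cases hc : i < q - 1
      · exact ⟨i + 1, by omega, by omega, hlt i hc⟩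
      · exact ⟨_, by omega, by omega, hge i (by omega)⟩
    · rintro ⟨i, hi, hi2, rfl⟩
      by_cases hc : i < q
      · refine ⟨i - 1, List.mem_range.mpr (by omega), ?_⟩
        rw [hlt _ (by omega)]
        congr 1; omega
      · refine ⟨h + (q - 1) - i, List.mem_range.mpr (by omega), ?_⟩
        rw [hge _ (by omega)]
        congr 1; omega
  have hpath : p.IsPath := by
    rw [SimpleGraph.Walk.isPath_def, hp]
    refine List.Nodup.map_on ?_ List.nodup_range
    intro i hi j hj hij
    rw [List.mem_range] at hi hj
    by_cases hc : i < q - 1 <;> by_cases hd : j < q - 1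
    · rw [hlt i hc, hlt j hd] at hij
      have := hinj _ _ (by omega) (by omega) (by omega) (by omega) hij
      omega
    · rw [hlt i hc, hge j (by omega)] at hij
      have := hinj _ _ (by omega) (by omega) (by omega) (by omega) hij
      omega
    · rw [hge i (by omega), hlt j hd] at hij
      have := hinj _ _ (by omega) (by omega) (by omega) (by omega) hij
      omega
    · rw [hge i (by omega), hge j (by omega)] at hij
      have := hinj _ _ (by omega) (by omega) (by omega) (by omega) hij
      omega
  refine ⟨_, SimpleGraph.Walk.cons hclose p, ?_, ?_⟩
  · rw [SimpleGraph.Walk.isCycle_iff_isPath_tail_and_le_length]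
    refine ⟨by simpa using hpath, ?_⟩
    rw [SimpleGraph.Walk.length_cons]
    omega
  · intro x
    rw [← hmem x, SimpleGraph.Walk.support_cons, List.mem_cons]
    constructor
    · rintro (rfl | hx)
      · exact p.end_mem_support
      · exact hx
    · exact Or.inr
end

section
/- Let G be a simple graph on n vertices whose vertex set is partitioned into the vertex set of a simple path P = v_1, v_2, ..., v_h with h ≥ 3 and the vertex sets of pairwise vertex-disjoint cycles C_1, ..., C_{r-1} (single vertices counting as trivial cycles), all disjoint from P. Suppose v_1 v_h ∉ E(G) and deg_G(v_1) + deg_G(v_h) ≥ n. Then at least one of the following holds: (i) there exists an index q with 2 < q < h such that v_1 v_q ∈ E(G) and v_{q-1} v_h ∈ E(G); or (ii) there exist an index j and vertices x, y of C_j such that y immediately follows x in the cyclic order of C_j (with y = x when C_j is trivial), x v_1 ∈ E(G), and y v_h ∈ E(G). -/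
/-- Pigeonhole dichotomy: the vertex set of `G` (on `n` vertices) is partitioned into the
vertex set of a simple path `P = v 1, ..., v h` (`h ≥ 3`) and the vertex sets of pairwise
vertex-disjoint cycles `C_1, ..., C_{r-1}` (each represented as a closed walk `w j` that is
either trivial, i.e. of length `0`, or an honest cycle), all disjoint from `P`.
If `v 1` and `v h` are nonadjacent and `deg (v 1) + deg (v h) ≥ n`, then either
(i) there is `q` with `2 < q < h` such that `v 1 ~ v q` and `v (q-1) ~ v h`, or
(ii) there are a cycle `C_j` and consecutive vertices `x, y` on it (`y` immediately following
`x` in its cyclic order, `y = x` when `C_j` is trivial) with `x ~ v 1` and `y ~ v h`. -/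
theorem stmt4 {V : Type*} [Fintype V] (G : SimpleGraph V) [DecidableRel G.Adj]
    (n : ℕ) (hn : Fintype.card V = n)
    (h : ℕ) (hh : 3 ≤ h) (v : ℕ → V)
    (hinj : ∀ i j, 1 ≤ i → i ≤ h → 1 ≤ j → j ≤ h → v i = v j → i = j)
    (hadjP : ∀ i, 1 ≤ i → i < h → G.Adj (v i) (v (i + 1)))
    (r : ℕ) (hr : 1 ≤ r)
    (a : Fin (r - 1) → V) (w : ∀ j, G.Walk (a j) (a j))
    (hcyc : ∀ j, (w j).length = 0 ∨ (w j).IsCycle)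
    (hdisjC : ∀ j j', j ≠ j' → ∀ x, x ∈ (w j).support → x ∉ (w j').support)
    (hdisjP : ∀ j, ∀ i, 1 ≤ i → i ≤ h → v i ∉ (w j).support)
    (hPnotC : ∀ j, ∀ x, x ∈ (w j).support → ¬ ∃ i, 1 ≤ i ∧ i ≤ h ∧ x = v i)
    (hcover : ∀ x : V, (∃ i, 1 ≤ i ∧ i ≤ h ∧ x = v i) ∨ ∃ j, x ∈ (w j).support)
    (hnadj : ¬ G.Adj (v 1) (v h))
    (hdeg : n ≤ G.degree (v 1) + G.degree (v h)) :
    (∃ q, 2 < q ∧ q < h ∧ G.Adj (v 1) (v q) ∧ G.Adj (v (q - 1)) (v h)) ∨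
    (∃ j x y,
      (((w j).length = 0 ∧ x = a j ∧ y = a j) ∨
        ∃ i, i < (w j).length ∧ (w j).getVert i = x ∧ (w j).getVert (i + 1) = y) ∧
      G.Adj x (v 1) ∧ G.Adj y (v h)) := by
  classical
  by_contra hcon
  push Not at hcon
  obtain ⟨hc1, hc2⟩ := hcon
  let S : Fin (r - 1) → V → V → Prop := fun j x y =>
    ((w j).length = 0 ∧ x = a j ∧ y = a j) ∨
        ∃ i, i < (w j).length ∧ (w j).getVert i = x ∧ (w j).getVert (i + 1) = y
  let R : V → V → Prop := fun y x =>
    (∃ i, 1 ≤ i ∧ i < h ∧ y = v i ∧ x = v (i + 1)) ∨ ∃ j, S j x y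
  have hSs : ∀ j x y, S j x y → x ∈ (w j).support := by
    rintro j x y (⟨_, rfl, _⟩ | ⟨i, hi, rfl, _⟩)
    · exact (w j).start_mem_support
    · exact (w j).getVert_mem_support i
  have hex : ∀ y, y ≠ v h → ∃ x, R y x := by
    intro y hy
    rcases hcover y with ⟨i, h1, h2, rfl⟩ | ⟨j, hj⟩
    · refine ⟨v (i+1), Or.inl ⟨i, h1, ?_, rfl, rfl⟩⟩
      exact lt_of_le_of_ne h2 (fun e => hy (by rw [e]))
    · obtain ⟨k, hk, hkl⟩ := SimpleGraph.Walk.mem_support_iff_exists_getVert.1 hj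
      by_cases hl : (w j).length = 0
      · refine ⟨a j, Or.inr ⟨j, Or.inl ⟨hl, rfl, ?_⟩⟩⟩
        have : k = 0 := by omega
        subst this
        simpa using hk.symm
      · rcases Nat.eq_zero_or_pos k with hk0 | hk0
        · subst hk0
          refine ⟨(w j).getVert ((w j).length - 1), Or.inr ⟨j, Or.inr ⟨(w j).length - 1, by omega, rfl, ?_⟩⟩⟩
          rw [Nat.sub_add_cancel (by omega)]
          simpa using hk
        · refine ⟨(w j).getVert (k - 1), Or.inr ⟨j, Or.inr ⟨k - 1, by omega, rfl, ?_⟩⟩⟩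
          rw [Nat.sub_add_cancel (by omega)]
          exact hk
  have hRinj : ∀ y y' x, R y x → R y' x → y = y' := by
    rintro y y' x (⟨i, h1, h2, rfl, hx⟩ | ⟨j, hj⟩) (⟨i', h1', h2', rfl, hx'⟩ | ⟨j', hj'⟩)
    · have := hinj (i+1) (i'+1) (by omega) (by omega) (by omega) (by omega) (hx.symm.trans hx')
      rw [show i = i' by omega]
    · exact absurd ⟨i+1, by omega, by omega, hx⟩ (hPnotC j' x (hSs _ _ _ hj'))
    · exact absurd ⟨i'+1, by omega, by omega, hx'⟩ (hPnotC j x (hSs _ _ _ hj))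
    · have hjj : j = j' := by
        by_contra hne
        exact hdisjC j j' hne x (hSs _ _ _ hj) (hSs _ _ _ hj')
      subst hjj
      rcases hj with ⟨h0, _, hy⟩ | ⟨i, hi, hix, hiy⟩ <;>
        rcases hj' with ⟨h0', _, hy'⟩ | ⟨i', hi', hix', hiy'⟩
      · rw [hy, hy']
      · omega
      · omega
      · rcases hcyc j with h0 | hC
        · omega
        · have : i = i' := hC.getVert_injOn' (by simp; omega) (by simp; omega) (hix.trans hix'.symm)
          rw [← hiy, ← hiy', this]
  choose! g hg using hex
  have hne : ∀ y ∈ G.neighborFinset (v h), y ≠ v h := by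
    intro y hy
    rw [SimpleGraph.mem_neighborFinset] at hy
    exact hy.ne'
  have hcard : ((G.neighborFinset (v h)).image g).card = G.degree (v h) := by
    rw [Finset.card_image_of_injOn, SimpleGraph.card_neighborFinset_eq_degree]
    intro y hy y' hy' e
    have h1 := hg y (hne y hy)
    have h2 := hg y' (hne y' hy')
    rw [← e] at h2
    exact hRinj _ _ _ h1 h2
  have hdis : Disjoint (G.neighborFinset (v 1)) ((G.neighborFinset (v h)).image g) := by
    rw [Finset.disjoint_left]
    intro x hx hx'
    obtain ⟨y, hy, rfl⟩ := Finset.mem_image.1 hx'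
    have h1 := hg y (hne y hy)
    rw [SimpleGraph.mem_neighborFinset] at hx hy
    rcases h1 with ⟨i, h1, h2, hyi, hxi⟩ | ⟨j, hj⟩
    · rw [hxi] at hx
      rw [hyi] at hy
      have hi1 : i ≠ 1 := by
        rintro rfl
        exact hnadj hy.symm
      have hih : i + 1 ≠ h := by
        intro e
        rw [e] at hx
        exact hnadj hx
      exact hc1 (i+1) (by omega) (by omega) hx (by simpa using hy.symm)
    · exact hc2 j _ _ hj hx.symm hy.symm
  have hsub : G.neighborFinset (v 1) ∪ ((G.neighborFinset (v h)).image g) ⊆ Finset.univ.erase (v 1) := by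
    intro x hx
    refine Finset.mem_erase.2 ⟨?_, Finset.mem_univ _⟩
    rintro rfl
    rcases Finset.mem_union.1 hx with hx | hx
    · simp at hx
    · obtain ⟨y, hy, hgy⟩ := Finset.mem_image.1 hx
      have h1 := hg y (hne y hy)
      rw [hgy] at h1
      rcases h1 with ⟨i, h1, h2, hyi, hxi⟩ | ⟨j, hj⟩
      · have := hinj _ _ (by omega) (by omega) (by omega) (by omega) hxi
        omega
      · exact hdisjP j 1 (by omega) (by omega) (hSs _ _ _ hj)
  have hle := Finset.card_le_card hsub
  rw [Finset.card_union_of_disjoint hdis, hcard, SimpleGraph.card_neighborFinset_eq_degree,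
    Finset.card_erase_of_mem (Finset.mem_univ _), Finset.card_univ, hn] at hle
  have : 0 < n := hn ▸ Fintype.card_pos_iff.2 ⟨v 1⟩
  omega
end

section
/- Let ℓ ≥ 0 and k ≥ 0 be integers and let G be a simple graph on n vertices such that the complement of G is k-degenerate and such that every pair of distinct nonadjacent vertices u, v of G satisfies deg_G(u) + deg_G(v) < n + ℓ (i.e., G equals its (n+ℓ)-closure). Then G has a co-vertex cover of size at most 2k + ℓ + 1. -/
/-- If the complement of `G` is `k`-degenerate (every nonempty induced subgraph of the
complement has a vertex of degree at most `k`) and `G` equals its `(n+ℓ)`-closure (no pair of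
distinct nonadjacent vertices has degree sum at least `n + ℓ`), then `G` has a co-vertex
cover of size at most `2k + ℓ + 1`, i.e. a set `S` of vertices whose complement is a clique. -/
theorem stmt5 {V : Type*} [Fintype V] [DecidableEq V] (G : SimpleGraph V)
    [DecidableRel G.Adj] (n k ℓ : ℕ) (hn : Fintype.card V = n)
    (hdegen : ∀ A : Finset V, A.Nonempty →
      ∃ v ∈ A, (A.filter fun u => u ≠ v ∧ ¬ G.Adj v u).card ≤ k)
    (hclosed : ∀ u v : V, u ≠ v → ¬ G.Adj u v → G.degree u + G.degree v < n + ℓ) :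
    ∃ S : Finset V, (∀ u v : V, u ∉ S → v ∉ S → u ≠ v → G.Adj u v) ∧
      S.card ≤ 2 * k + ℓ + 1 := by
  classical
  have hdeg : ∀ v : V, G.degree v +
      (Finset.univ.filter fun u => u ≠ v ∧ ¬ G.Adj v u).card + 1 = n := by
    intro v
    have h1 : (Finset.univ.filter fun u => u ≠ v ∧ ¬ G.Adj v u) = Gᶜ.neighborFinset v := by
      ext u
      simp [SimpleGraph.compl_adj, eq_comm]
    have h2 := G.degree_compl v
    have h3 := G.degree_lt_card_verts v
    rw [h1, SimpleGraph.card_neighborFinset_eq_degree, h2]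
    omega
  let P : Finset V → Prop := fun I =>
    (∀ u ∈ I, ∀ v ∈ I, u ≠ v → G.Adj u v) ∧
    ∀ v ∈ I, (Finset.univ.filter fun u => u ≠ v ∧ ¬ G.Adj v u).card ≤ k
  obtain ⟨I, hI, hmax⟩ := Finset.exists_max_image (Finset.univ.filter P) Finset.card
    ⟨∅, by simp [P]⟩
  have hPI : P I := by simpa using hI
  refine ⟨Iᶜ, fun u v hu hv huv => hPI.1 u (by simpa using hu) v (by simpa using hv) huv, ?_⟩
  by_cases hA : (Iᶜ).Nonempty
  swap
  · rw [Finset.not_nonempty_iff_eq_empty.1 hA]; simp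
  obtain ⟨v, hvA, hv⟩ := hdegen _ hA
  have hvI : v ∉ I := by simpa using hvA
  have hsub : (Finset.univ.filter fun u => u ≠ v ∧ ¬ G.Adj v u) =
      (Iᶜ.filter fun u => u ≠ v ∧ ¬ G.Adj v u) ∪ (I.filter fun u => u ≠ v ∧ ¬ G.Adj v u) := by
    ext u
    by_cases h : u ∈ I <;> simp [h]
  by_cases hex : ∃ u ∈ I, ¬ G.Adj v u
  · obtain ⟨u, huI, huv⟩ := hex
    have h1 := hclosed v u (fun h => hvI (h ▸ huI)) huv
    have h2 := hPI.2 u huI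
    have h3 := hdeg u
    have h4 := hdeg v
    have h5 := Finset.card_union_le (Iᶜ.filter fun u => u ≠ v ∧ ¬ G.Adj v u)
      (I.filter fun u => u ≠ v ∧ ¬ G.Adj v u)
    rw [← hsub] at h5
    have h6 := Finset.card_filter_le I (fun u => u ≠ v ∧ ¬ G.Adj v u)
    have h7 := Finset.card_add_card_compl I
    omega
  · push Not at hex
    exfalso
    have hempty : (I.filter fun u => u ≠ v ∧ ¬ G.Adj v u) = ∅ := by
      rw [Finset.filter_eq_empty_iff]
      intro u hu h
      exact h.2 (hex u hu)
    rw [hempty, Finset.union_empty] at hsub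
    have hP : P (insert v I) := by
      constructor
      · intro a ha b hb hab
        rcases Finset.mem_insert.1 ha with rfl | ha2 <;>
          rcases Finset.mem_insert.1 hb with rfl | hb2
        · exact absurd rfl hab
        · exact hex b hb2
        · exact (hex a ha2).symm
        · exact hPI.1 a ha2 b hb2 hab
      · intro a ha
        rcases Finset.mem_insert.1 ha with rfl | ha
        · rw [hsub]; exact hv
        · exact hPI.2 a ha
    have := hmax (insert v I) (by simpa using hP)
    rw [Finset.card_insert_of_notMem hvI] at this
    omega
end

section
/- Let G be a simple graph and let S be a nonempty co-vertex cover of G. Then there exists a set C' ⊆ V(G) \ S with |S ∪ C'| ≤ 3|S| such that for every positive integer r, G has a cycle cover of size at most r if and only if the induced subgraph G[S ∪ C'] has a cycle cover of size at most r. -/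
namespace CC

def CycOK {V : Type*} (G : SimpleGraph V) (l : List V) : Prop :=
  l.length = 1 ∨ (3 ≤ l.length ∧ Cycle.Chain G.Adj (l : Cycle V))

def Cov {V : Type*} (G : SimpleGraph V) (A : Finset V) (r : ℕ) : Prop :=
  ∃ ls : List (List V), ls.length ≤ r ∧ ls.flatten.Nodup ∧ (∀ v, v ∈ ls.flatten ↔ v ∈ A) ∧
    ∀ l ∈ ls, CycOK G l

theorem walk_chain {V : Type*} (G : SimpleGraph V) (l : List V) (b a : V)
    (h : List.IsChain G.Adj (b :: (l ++ [a]))) :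
    ∃ w : G.Walk b a, w.support = b :: (l ++ [a]) := by
  induction l generalizing b with
  | nil =>
    have : G.Adj b a := by simpa using h
    exact ⟨SimpleGraph.Walk.cons this SimpleGraph.Walk.nil, by simp⟩
  | cons x l ih =>
    rw [List.cons_append, List.isChain_cons_cons] at h
    obtain ⟨w, hw⟩ := ih x h.2
    exact ⟨SimpleGraph.Walk.cons h.1 w, by simp [hw]⟩

theorem walk_of_list {V : Type*} (G : SimpleGraph V) (l : List V) (hl : 3 ≤ l.length)
    (hn : l.Nodup) (hc : Cycle.Chain G.Adj (l : Cycle V)) :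
    ∃ a : V, ∃ c : G.Walk a a, c.IsCycle ∧ ∀ x, x ∈ l ↔ x ∈ c.support := by
  match l, hl, hn, hc with
  | a :: b :: l, hl, hn, hc =>
    rw [Cycle.chain_coe_cons] at hc
    have h1 : List.IsChain G.Adj (b :: (l ++ [a])) := by
      simpa using (List.isChain_cons_cons.1 (by simpa using hc)).2
    have hab : G.Adj a b := (List.isChain_cons_cons.1 (by simpa using hc)).1
    obtain ⟨w', hs⟩ := walk_chain G l b a h1
    have hlen : w'.length + 1 = (b :: (l ++ [a])).length := by
      rw [← hs]; simp
    refine ⟨a, SimpleGraph.Walk.cons hab w', ?_, ?_⟩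
    · rw [SimpleGraph.Walk.isCycle_iff_isPath_tail_and_le_length]
      constructor
      · rw [SimpleGraph.Walk.isPath_def]
        rw [SimpleGraph.Walk.support_tail_of_not_nil _ (by simp), SimpleGraph.Walk.support_cons,
          List.tail_cons, hs]
        have : (b :: (l ++ [a])).Perm (a :: b :: l) := by
          simpa using (List.perm_append_comm (l₁ := b :: l) (l₂ := [a]))
        exact this.nodup_iff.2 hn
      · simp at hlen hl ⊢; omega
    · intro x
      rw [SimpleGraph.Walk.support_cons, hs]; simp; tauto

theorem list_of_walk {V : Type*} (G : SimpleGraph V) (a : V) (c : G.Walk a a) (h : c.IsCycle) :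
    ∃ l : List V, l.Nodup ∧ CycOK G l ∧ ∀ x, x ∈ l ↔ x ∈ c.support := by
  cases c with
  | nil => simp at h
  | @cons _ b _ hab p =>
    have h3 := h.three_le_length
    have hn := h.support_nodup
    have hch := (SimpleGraph.Walk.cons hab p).isChain_adj_support
    simp only [SimpleGraph.Walk.support_cons, List.tail_cons] at hn hch
    have hlast : p.support.dropLast ++ [a] = p.support := by
      conv_rhs => rw [← List.dropLast_append_getLast p.support_ne_nil]
      simp
    have hp : (a :: p.support.dropLast).Perm p.support := by
      conv_rhs => rw [← hlast]
      simpa using (List.perm_append_comm (l₁ := [a]) (l₂ := p.support.dropLast))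
    refine ⟨a :: p.support.dropLast, hp.nodup_iff.2 hn, Or.inr ⟨?_, ?_⟩, ?_⟩
    · rw [hp.length_eq]; simpa using h3
    · rw [Cycle.chain_coe_cons, hlast]; exact hch
    · intro x
      rw [hp.mem_iff]
      simp
      intro hx; rw [hx]; simp

theorem cover_iff {V : Type*} [Fintype V] (G : SimpleGraph V) (r : ℕ) :
    HasCycleCoverLE G r ↔ Cov G Finset.univ r := by
  classical
  constructor
  · rintro ⟨P, hr, hu, hP⟩
    have key : ∀ p ∈ P, ∃ l : List V, l.Nodup ∧ CycOK G l ∧ ∀ x, x ∈ l ↔ x ∈ p := by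
      intro p hp
      rcases hP p hp with ⟨x, rfl⟩ | ⟨a, c, hc, hx⟩
      · exact ⟨[x], by simp, Or.inl rfl, by simp⟩
      · obtain ⟨l, h1, h2, h3⟩ := list_of_walk G a c hc
        exact ⟨l, h1, h2, fun x => by rw [h3, hx]⟩
    choose! f hf1 hf2 hf3 using key
    refine ⟨P.toList.map f, by simpa using hr, ?_, ?_, ?_⟩
    · rw [List.nodup_flatten]
      constructor
      · intro l hl
        simp at hl
        obtain ⟨p, hp, rfl⟩ := hl
        exact hf1 p hp
      · rw [List.pairwise_map]
        refine P.nodup_toList.imp_of_mem ?_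
        intro p q hp hq hpq x hxp hxq
        simp at hp hq
        rw [hf3 p hp] at hxp
        rw [hf3 q hq] at hxq
        exact hpq ((hu x).unique ⟨hp, hxp⟩ ⟨hq, hxq⟩)
    · intro v
      obtain ⟨p, ⟨hp, hv⟩, -⟩ := hu v
      simp
      exact ⟨p, hp, (hf3 p hp v).2 hv⟩
    · intro l hl
      simp at hl
      obtain ⟨p, hp, rfl⟩ := hl
      exact hf2 p hp
  · rintro ⟨ls, hr, hn, hA, hc⟩
    rw [List.nodup_flatten] at hn
    refine ⟨(ls.map List.toFinset).toFinset, ?_, ?_, ?_⟩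
    · exact (List.toFinset_card_le _).trans (by simpa using hr)
    · intro v
      have := (hA v).2 (by simp)
      rw [List.mem_flatten] at this
      obtain ⟨l, hl, hv⟩ := this
      refine ⟨l.toFinset, ⟨by simp; exact ⟨l, hl, rfl⟩, by simpa using hv⟩, ?_⟩
      rintro q ⟨hq, hvq⟩
      simp at hq
      obtain ⟨l', hl', rfl⟩ := hq
      by_contra hne
      have hne' : l' ≠ l := fun h => hne (by rw [h])
      have : Std.Symm (List.Disjoint (α := V)) := ⟨fun x y h => List.Disjoint.symm h⟩
      have := hn.2.forall hl' hl hne'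
      exact this (by simpa using hvq) hv
    · intro p hp
      simp at hp
      obtain ⟨l, hl, rfl⟩ := hp
      rcases hc l hl with h | ⟨h, h'⟩
      · obtain ⟨x, rfl⟩ := List.length_eq_one_iff.1 h
        exact Or.inl ⟨x, by simp⟩
      · obtain ⟨a, c, h1, h2⟩ := walk_of_list G l h (hn.1 l hl) h'
        exact Or.inr ⟨a, c, h1, fun x => by rw [← h2]; simp⟩

theorem cycOK_map {V : Type*} (G : SimpleGraph V) (A : Set V) (l : List A) :
    CycOK G (l.map Subtype.val) ↔ CycOK (G.induce A) l := by
  unfold CycOK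
  rw [← Cycle.map_coe, Cycle.chain_map, List.length_map]
  rfl

theorem cov_induce {V : Type*} [Fintype V] [DecidableEq V] (G : SimpleGraph V) (A : Finset V)
    (r : ℕ) : HasCycleCoverLE (G.induce (↑A : Set V)) r ↔ Cov G A r := by
  rw [cover_iff]
  constructor
  · rintro ⟨ls, hr, hn, hA, hc⟩
    refine ⟨ls.map (List.map Subtype.val), by simpa using hr, ?_, ?_, ?_⟩
    · rw [← List.map_flatten]
      exact hn.map Subtype.val_injective
    · intro v
      rw [← List.map_flatten, List.mem_map]
      constructor
      · rintro ⟨x, -, rfl⟩; exact x.2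
      · intro hv; exact ⟨⟨v, hv⟩, (hA _).2 (by simp), rfl⟩
    · intro l hl
      rw [List.mem_map] at hl
      obtain ⟨l, hl, rfl⟩ := hl
      exact (cycOK_map G _ l).2 (hc l hl)
  · rintro ⟨ls, hr, hn, hA, hc⟩
    have : ∀ l ∈ ls, ∀ x ∈ l, x ∈ (↑A : Set V) := by
      intro l hl x hx
      exact (hA x).1 (List.mem_flatten.2 ⟨l, hl, hx⟩)
    lift ls to List (List (↑A : Set V)) using this
    rw [← List.map_flatten] at hn hA
    refine ⟨ls, by simpa using hr, hn.of_map _, ?_, ?_⟩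
    · intro v
      have := (hA v.1).2 v.2
      rw [List.mem_map] at this
      obtain ⟨x, hx, h⟩ := this
      rw [Subtype.val_injective h] at hx
      simpa using hx
    · intro l hl
      exact (cycOK_map G _ l).1 (hc _ (List.mem_map_of_mem hl))

def HR {V : Type*} (G : SimpleGraph V) (K : V → Prop) (a b : V) : Prop := G.Adj a b ∨ (K a ∧ K b)

def MP {V : Type*} (G : SimpleGraph V) (K : V → Prop) (l : List V) : Prop :=
  List.IsChain (HR G K) l ∧ (∀ x ∈ l.head?, K x) ∧ ∀ x ∈ l.getLast?, K x

def UP {V : Type*} (G : SimpleGraph V) (K : V → Prop) (l : List V) : Prop :=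
  (∃ x, ¬ K x ∧ l = [x]) ∨
    (3 ≤ l.length ∧ Cycle.Chain (fun a b => G.Adj a b ∧ ¬ (K a ∧ K b)) (l : Cycle V))

theorem UP.cycOK {V : Type*} {G : SimpleGraph V} {K : V → Prop} {l : List V} (h : UP G K l) :
    CycOK G l := by
  rcases h with ⟨x, -, rfl⟩ | ⟨h1, h2⟩
  · exact Or.inl rfl
  · exact Or.inr ⟨h1, h2.imp (fun a b h => h.1)⟩

theorem MP.nil {V : Type*} (G : SimpleGraph V) (K : V → Prop) : MP G K [] := by
  simp [MP]

theorem MP.append {V : Type*} {G : SimpleGraph V} {K : V → Prop} {l1 l2 : List V}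
    (h1 : MP G K l1) (h2 : MP G K l2) : MP G K (l1 ++ l2) := by
  refine ⟨List.isChain_append.2 ⟨h1.1, h2.1, ?_⟩, ?_, ?_⟩
  · intro x hx y hy
    exact Or.inr ⟨h1.2.2 x hx, h2.2.1 y hy⟩
  · intro x hx
    cases l1 with
    | nil => exact h2.2.1 x (by simpa using hx)
    | cons a l => exact h1.2.1 x (by simpa using hx)
  · intro x hx
    rcases l2.eq_nil_or_concat with rfl | ⟨l, b, rfl⟩
    · exact h1.2.2 x (by simpa using hx)
    · exact h2.2.2 x (by simpa [List.getLast?_append] using hx)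

theorem MP.split {V : Type*} {G : SimpleGraph V} {K : V → Prop} {l1 l2 : List V} {r : V}
    (hK : ∀ a, G.Adj a r → K a)
    (h : MP G K (l1 ++ r :: l2)) : MP G K l1 ∧ MP G K l2 := by
  obtain ⟨hc, hh, hl⟩ := h
  rw [List.isChain_append] at hc
  obtain ⟨c1, c2, c3⟩ := hc
  constructor
  · refine ⟨c1, ?_, ?_⟩
    · intro x hx
      cases l1 with
      | nil => simp at hx
      | cons a l => exact hh x (by simpa using hx)
    · intro x hx
      rcases c3 x hx r (by simp) with h | h
      · exact hK x h
      · exact h.1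
  · cases l2 with
    | nil => exact MP.nil G K
    | cons b l =>
      rw [List.isChain_cons_cons] at c2
      refine ⟨c2.2, ?_, ?_⟩
      · intro x hx
        have : b = x := by simpa using hx
        subst this
        rcases c2.1 with h | h
        · exact hK _ h.symm
        · exact h.2
      · intro x hx
        apply hl x
        rw [List.getLast?_append_of_ne_nil _ (by simp), List.getLast?_cons_cons]
        exact hx

theorem MP.filter {V : Type*} [DecidableEq V] {G : SimpleGraph V} {K : V → Prop} {R : Finset V}
    (hK : ∀ r ∈ R, ∀ a, G.Adj a r → K a) {l : List V}
    (h : MP G K l) : MP G K (l.filter (· ∉ R)) := by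
  induction hn : l.length using Nat.strong_induction_on generalizing l with
  | _ n ih =>
    by_cases hr : ∃ r ∈ l, r ∈ R
    · obtain ⟨r, hrl, hrR⟩ := hr
      obtain ⟨l1, l2, rfl⟩ := List.append_of_mem hrl
      obtain ⟨h1, h2⟩ := h.split (hK r hrR)
      have e1 := ih l1.length (by simp at hn; omega) h1 rfl
      have e2 := ih l2.length (by simp at hn; omega) h2 rfl
      simpa [List.filter_append, hrR] using e1.append e2
    · push Not at hr
      rw [List.filter_eq_self.2 (by simpa using hr)]
      exact h

theorem classify {V : Type*} {G : SimpleGraph V} {K : V → Prop} {l : List V}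
    (h : CycOK G l) : UP G K l ∨ ∃ l', l'.Perm l ∧ MP G K l' := by
  rcases h with h | ⟨h3, hc⟩
  · obtain ⟨x, rfl⟩ := List.length_eq_one_iff.1 h
    by_cases hx : K x
    · exact Or.inr ⟨[x], List.Perm.refl _, by simp [MP, hx]⟩
    · exact Or.inl (Or.inl ⟨x, hx, rfl⟩)
  · by_cases hu : Cycle.Chain (fun a b => G.Adj a b ∧ ¬ (K a ∧ K b)) (l : Cycle V)
    · exact Or.inl (Or.inr ⟨h3, hu⟩)
    right
    have key : ∃ y l1 x, (y :: (l1 ++ [x])) ~r l ∧ K x ∧ K y := by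
      match l, h3 with
      | a :: l, h3 =>
      rw [Cycle.chain_coe_cons, List.isChain_iff_forall_rel_of_append_cons_cons] at hu
      push Not at hu
      obtain ⟨x, y, l1, l2, he, hxy⟩ := hu
      have hadj : G.Adj x y := by
        rw [Cycle.chain_coe_cons, List.isChain_iff_forall_rel_of_append_cons_cons] at hc
        exact hc he
      have hK := hxy hadj
      rcases l2.eq_nil_or_concat with rfl | ⟨l2, b, rfl⟩
      · have e : (a :: l) ++ [a] = (l1 ++ [x]) ++ [y] := by simpa using he
        obtain ⟨e1, e2⟩ := List.append_inj' e rfl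
        cases l1 with
        | nil => simp at e1; simp [e1] at h3
        | cons c l1 =>
          refine ⟨c, l1, x, ?_, hK.1, ?_⟩
          · rw [e1]; exact List.IsRotated.refl _
          · simp at e1 e2; rw [← e1.1, e2]; exact hK.2
      · have e : (a :: l) ++ [a] = (l1 ++ x :: y :: l2) ++ [b] := by simpa using he
        obtain ⟨e1, e2⟩ := List.append_inj' e rfl
        refine ⟨y, l2 ++ l1, x, ?_, hK.1, hK.2⟩
        rw [e1]
        have := List.isRotated_append (l := y :: l2) (l' := l1 ++ [x])
        simpa using this
    obtain ⟨y, l1, x, hr, hx, hy⟩ := key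
    refine ⟨_, hr.perm, ?_, ?_, ?_⟩
    · rw [← Cycle.coe_eq_coe.2 hr, Cycle.chain_coe_cons] at hc
      have : List.IsChain G.Adj (y :: (l1 ++ [x])) := by
        have h2 : y :: (l1 ++ [x] ++ [y]) = (y :: (l1 ++ [x])) ++ [y] := by simp
        rw [h2, List.isChain_append] at hc
        exact hc.1
      exact this.imp (fun a b h => Or.inl h)
    · simpa using hy
    · have h2 : y :: (l1 ++ [x]) = (y :: l1) ++ [x] := by simp
      intro z hz
      rw [h2, List.getLast?_concat] at hz
      obtain rfl : x = z := by simpa using hz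
      exact hx

theorem merge {V : Type*} {G : SimpleGraph V} {K : V → Prop} (ls : List (List V))
    (h : ∀ l ∈ ls, CycOK G l) :
    ∃ (L : List V) (us : List (List V)), MP G K L ∧ (∀ u ∈ us, UP G K u) ∧
      (L ++ us.flatten).Perm ls.flatten ∧ us.length ≤ ls.length ∧
      ((∃ l ∈ ls, ¬ UP G K l) → us.length + 1 ≤ ls.length) := by
  induction ls with
  | nil => exact ⟨[], [], MP.nil G K, by simp, by simp, by simp, by simp⟩
  | cons l ls ih =>
    obtain ⟨L, us, h1, h2, h3, h4, h5⟩ := ih (fun l hl => h l (List.mem_cons_of_mem _ hl))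
    by_cases hu : UP G K l
    · refine ⟨L, l :: us, h1, ?_, ?_, by simpa using h4, ?_⟩
      · intro u hu'
        rcases List.mem_cons.1 hu' with rfl | h
        · exact hu
        · exact h2 u h
      · rw [List.flatten_cons, List.flatten_cons]
        refine List.Perm.trans ?_ (List.Perm.append_left l h3)
        rw [← List.append_assoc, ← List.append_assoc]
        exact List.Perm.append_right _ List.perm_append_comm
      · rintro ⟨l', hl', hn⟩
        rcases List.mem_cons.1 hl' with rfl | h
        · exact absurd hu hn
        · simpa using h5 ⟨l', h, hn⟩
    · rcases classify (K := K) (h l (by simp)) with h' | ⟨l', hp, hm⟩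
      · exact absurd h' hu
      refine ⟨l' ++ L, us, hm.append h1, h2, ?_, by simp; omega, fun _ => by simpa using h4⟩
      rw [List.flatten_cons, List.append_assoc]
      exact hp.append h3

theorem count_chain {V : Type*} (P : V → Prop) [DecidablePred P] (l : List V) (x z : V)
    (h : List.IsChain (fun a b => ¬ (P a ∧ P b)) (x :: (l ++ [z]))) :
    (x :: l).countP P ≤ (l ++ [z]).countP (fun a => ¬ P a) := by
  induction l generalizing x with
  | nil =>
    simp at h
    by_cases hx : P x <;> by_cases hz : P z <;> simp_all
  | cons y l ih =>
    rw [List.cons_append, List.isChain_cons_cons] at h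
    have := ih y h.2
    rw [List.countP_cons, List.cons_append, List.countP_cons (l := l ++ [z])]
    have h1 := h.1
    by_cases hx : P x <;> by_cases hy : P y <;> simp_all <;> omega

theorem UP.count {V : Type*} {G : SimpleGraph V} {K : V → Prop} {l : List V} (h : UP G K l)
    (P : V → Prop) [DecidablePred P] (hP : ∀ a, P a → K a) :
    l.countP P ≤ l.countP (fun a => ¬ P a) := by
  rcases h with ⟨x, hx, rfl⟩ | ⟨h3, hc⟩
  · have : ¬ P x := fun h => hx (hP x h)
    simp [this]
  · match l, h3 with
    | a :: l, h3 =>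
      rw [Cycle.chain_coe_cons] at hc
      have := count_chain P l a a (hc.imp (fun a b h h' => h.2 ⟨hP _ h'.1, hP _ h'.2⟩))
      refine this.trans (le_of_eq ?_)
      exact List.Perm.countP_eq _ (by simpa using List.perm_append_comm (l₁ := l) (l₂ := [a]))

theorem UPs.count {V : Type*} {G : SimpleGraph V} {K : V → Prop} {us : List (List V)}
    (h : ∀ u ∈ us, UP G K u)
    (P : V → Prop) [DecidablePred P] (hP : ∀ a, P a → K a) :
    us.flatten.countP P ≤ us.flatten.countP (fun a => ¬ P a) := by
  induction us with
  | nil => simp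
  | cons u us ih =>
    rw [List.flatten_cons, List.countP_append, List.countP_append]
    exact Nat.add_le_add ((h u (by simp)).count P hP)
      (ih (fun l hl => h l (List.mem_cons_of_mem _ hl)))

theorem nbrs {V : Type*} {rel : V → V → Prop} {l : List V} (hn : l.Nodup) (h3 : 3 ≤ l.length)
    (hc : Cycle.Chain rel (l : Cycle V)) {x : V} (hx : x ∈ l) :
    ∃ y ∈ l, ∃ z ∈ l, y ≠ z ∧ rel y x ∧ rel x z := by
  obtain ⟨l1, l2, rfl⟩ := List.append_of_mem hx
  have hr : (l1 ++ x :: l2) ~r (x :: (l2 ++ l1)) := by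
    simpa using List.isRotated_append (l := l1) (l' := x :: l2)
  rw [Cycle.coe_eq_coe.2 hr, Cycle.chain_coe_cons] at hc
  have hn' := hr.perm.nodup_iff.1 hn
  have hl := hr.perm.length_eq
  have hmem : ∀ v, v ∈ l1 ++ x :: l2 ↔ v ∈ x :: (l2 ++ l1) := fun v => hr.perm.mem_iff
  generalize l2 ++ l1 = m at *
  rw [hl] at h3
  match m, h3 with
  | z :: m, h3 =>
    rcases m.eq_nil_or_concat with rfl | ⟨m, y, rfl⟩
    · simp at h3
    refine ⟨y, (hmem y).2 (by simp), z, (hmem z).2 (by simp), ?_, ?_, ?_⟩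
    · rintro rfl
      simp at hn'
    · have e : x :: (z :: (m.concat y) ++ [x]) = (x :: z :: m) ++ y :: x :: [] := by simp
      rw [List.isChain_iff_forall_rel_of_append_cons_cons] at hc
      exact hc e
    · exact (List.isChain_cons_cons.1 hc).1

structure Setup {V : Type*} [DecidableEq V] (G : SimpleGraph V) (S T C R : Finset V)
    (mi mo : V → V) : Prop where
  hTS : T ⊆ S
  hRC : R ⊆ C
  hSC : ∀ v, v ∈ S ↔ v ∉ C
  hcl : ∀ u ∈ C, ∀ v ∈ C, u ≠ v → G.Adj u v
  hR : ∀ u ∈ S, ∀ r ∈ R, G.Adj u r → u ∈ T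
  mi_adj : ∀ t ∈ T, G.Adj t (mi t)
  mo_adj : ∀ t ∈ T, G.Adj t (mo t)
  mi_mem : ∀ t ∈ T, mi t ∈ R
  mo_mem : ∀ t ∈ T, mo t ∈ R
  mi_inj : ∀ t ∈ T, ∀ t' ∈ T, mi t = mi t' → t = t'
  mo_inj : ∀ t ∈ T, ∀ t' ∈ T, mo t = mo t' → t = t'
  mio : ∀ t ∈ T, ∀ t' ∈ T, mi t ≠ mo t'

/-- normal form -/
def NF {V : Type*} [DecidableEq V] (G : SimpleGraph V) (S T C R : Finset V) (r : ℕ) : Prop :=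
  ∃ (L : List V) (us : List (List V)), MP G (fun v => v ∈ T ∨ v ∈ C) L ∧
    (∀ u ∈ us, UP G (fun v => v ∈ T ∨ v ∈ C) u) ∧ (L ++ us.flatten).Nodup ∧
    (∀ v, v ∈ L ++ us.flatten ↔ v ∈ S ∪ (C \ R)) ∧ us.length + 1 ≤ r

theorem countP_le_card {V : Type*} [DecidableEq V] {l : List V} (hn : l.Nodup) (P : V → Prop)
    [DecidablePred P] (A : Finset V) (h : ∀ x ∈ l, P x → x ∈ A) : l.countP P ≤ A.card := by
  rw [List.countP_eq_length_filter, ← List.toFinset_card_of_nodup (hn.filter _)]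
  apply Finset.card_le_card
  intro x hx
  simp at hx
  exact h x hx.1 hx.2

theorem card_le_countP {V : Type*} [DecidableEq V] {l : List V} (P : V → Prop)
    [DecidablePred P] (A : Finset V) (h : ∀ x ∈ A, x ∈ l ∧ P x) : A.card ≤ l.countP P := by
  rw [List.countP_eq_length_filter]
  refine le_trans (Finset.card_le_card ?_) (List.toFinset_card_le _)
  intro x hx
  simpa using h x hx

theorem UPs.card {V : Type*} [DecidableEq V] {G : SimpleGraph V} {S T C R : Finset V} {mi mo : V → V}
    (H : Setup G S T C R mi mo) {us : List (List V)}
    (h : ∀ u ∈ us, UP G (fun v => v ∈ T ∨ v ∈ C) u) (hn : us.flatten.Nodup) (A : Finset V)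
    (hA : ∀ x ∈ A, x ∈ us.flatten ∧ x ∈ C) : A.card ≤ S.card := by
  refine (card_le_countP (fun v => v ∈ C) A hA).trans ((UPs.count h _ ?_).trans
    (countP_le_card hn _ S ?_))
  · intro a ha; exact Or.inr ha
  · intro x _ hx; exact (H.hSC x).2 (by simpa using hx)

theorem UP_nbrs {V : Type*} [DecidableEq V] {G : SimpleGraph V} {K : V → Prop} {u : List V}
    (h : UP G K u) (hn : u.Nodup) {c : V} (hc : c ∈ u) (hK : K c) :
    ∃ y z, y ≠ z ∧ ¬ K y ∧ ¬ K z ∧ G.Adj y c ∧ G.Adj z c := by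
  rcases h with ⟨x, hx, rfl⟩ | ⟨h3, hch⟩
  · simp at hc; subst hc; exact absurd hK hx
  · obtain ⟨y, -, z, -, hyz, h1, h2⟩ := nbrs hn h3 hch hc
    exact ⟨y, z, hyz, fun h => h1.2 ⟨h, hK⟩, fun h => h2.2 ⟨hK, h⟩, h1.1, h2.1.symm⟩

theorem forward {V : Type*} [DecidableEq V] {G : SimpleGraph V} {S T C R : Finset V} {mi mo : V → V}
    (H : Setup G S T C R mi mo) (D : Finset V) (hD : D ⊆ C) (hRD : C \ R ⊆ D)
    (hcard : S.card < D.card) (r : ℕ) (h : Cov G (S ∪ D) r) : NF G S T C R r := by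
  obtain ⟨ls, hr, hn, hA, hc⟩ := h
  obtain ⟨L, us, h1, h2, h3, h4, h5⟩ := merge (K := fun v => v ∈ T ∨ v ∈ C) ls hc
  have hm : ∃ l ∈ ls, ¬ UP G (fun v => v ∈ T ∨ v ∈ C) l := by
    by_contra hcon
    push Not at hcon
    have := UPs.card H hcon hn D (fun x hx => ⟨(hA x).2 (by simp [hx]), hD hx⟩)
    omega
  have hRK : ∀ r ∈ R, ∀ a, G.Adj a r → (a ∈ T ∨ a ∈ C) := by
    intro r hr a ha
    by_cases haC : a ∈ C
    · exact Or.inr haC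
    · exact Or.inl (H.hR a ((H.hSC a).2 haC) r hr ha)
  have hn' : (L ++ us.flatten).Nodup := h3.nodup_iff.2 hn
  have husR : ∀ x ∈ us.flatten, x ∉ R := by
    intro x hx hxR
    rw [List.nodup_append] at hn'
    obtain ⟨u, hu, hxu⟩ := List.mem_flatten.1 hx
    obtain ⟨y, z, -, hy, -, hyc, -⟩ := UP_nbrs (h2 u hu)
      ((List.nodup_flatten.1 hn'.2.1).1 u hu) hxu (Or.inr (H.hRC hxR))
    exact hy (hRK x hxR y hyc)
  refine ⟨L.filter (· ∉ R), us, h1.filter hRK, h2, ?_, ?_, (h5 hm).trans hr⟩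
  · exact hn'.sublist (List.Sublist.append List.filter_sublist (List.Sublist.refl _))
  · intro v
    have e : v ∈ L ++ us.flatten ↔ v ∈ S ∪ D := by rw [h3.mem_iff, hA]
    have hS := H.hSC v
    have hR : v ∈ R → v ∈ C := fun h => H.hRC h
    have hD' : v ∈ D → v ∈ C := fun h => hD h
    have hRD' : v ∈ C \ R → v ∈ D := fun h => hRD h
    have hu := husR v
    clear h1 h2 h3 h4 h5 hm hRK hn' husR hA hc hn hr hD hRD hcard
    simp only [List.mem_append, List.mem_filter, decide_eq_true_eq, Finset.mem_union,
      Finset.mem_sdiff] at e hRD' hu ⊢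
    grind

theorem expand {V : Type*} [DecidableEq V] {G : SimpleGraph V} {S T C R : Finset V} {mi mo : V → V}
    (H : Setup G S T C R mi mo) (l : List V) (a : V)
    (hc : List.IsChain (HR G (fun v => v ∈ T ∨ v ∈ C)) (a :: l))
    (hl : ∀ x ∈ (a :: l).getLast?, x ∈ T ∨ x ∈ C) (hn : (a :: l).Nodup)
    (hR : ∀ x ∈ a :: l, x ∉ R) :
    ∃ L, List.IsChain G.Adj (a :: L) ∧ (a :: L).Nodup ∧ (∀ x ∈ (a :: L).getLast?, x ∈ C) ∧
      (∀ x ∈ l, x ∈ L) ∧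
      ∀ x ∈ L, x ∈ l ∨ (a ∈ T ∧ x = mo a) ∨ (∃ t ∈ l, t ∈ T ∧ (x = mi t ∨ x = mo t)) := by
  induction l generalizing a with
  | nil =>
    have ha : a ∈ T ∨ a ∈ C := hl a (by simp)
    by_cases haT : a ∈ T
    · refine ⟨[mo a], ?_, ?_, ?_, ?_, ?_⟩
      · simpa using H.mo_adj a haT
      · simpa using (H.mo_adj a haT).ne
      · simpa using H.hRC (H.mo_mem a haT)
      · simp
      · simp [haT]
    · refine ⟨[], ?_, ?_, ?_, ?_, ?_⟩
      · simp
      · simp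
      · simpa using ha.resolve_left haT
      · simp
      · simp
  | cons b l ih =>
    rw [List.isChain_cons_cons] at hc
    obtain ⟨hab, hc⟩ := hc
    rw [List.nodup_cons] at hn
    obtain ⟨L, i1, i2, i3, i4, i5⟩ := ih b hc (by simpa using hl) hn.2
      (fun x hx => hR x (List.mem_cons_of_mem _ hx))
    have haR : a ∉ R := hR a (by simp)
    have hbR : b ∉ R := hR b (by simp)
    have hlR : ∀ x ∈ l, x ∉ R := fun x hx => hR x (by simp [hx])
    have hne : a ≠ b := fun h => hn.1 (by simp [h])
    have hal : a ∉ l := fun h => hn.1 (by simp [h])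
    have hbl : b ∉ l := (List.nodup_cons.1 hn.2).1
    have ha : a ∉ b :: L := by
      intro h
      rcases List.mem_cons.1 h with h | h
      · exact hne h
      rcases i5 a h with h | ⟨h, h'⟩ | ⟨t, h, hT, h' | h'⟩
      · exact hal h
      · exact haR (h' ▸ H.mo_mem b h)
      · exact haR (h' ▸ H.mi_mem t hT)
      · exact haR (h' ▸ H.mo_mem t hT)
    have hmo : a ∈ T → mo a ∉ b :: L := by
      intro haT h
      rcases List.mem_cons.1 h with h | h
      · exact hbR (h ▸ H.mo_mem a haT)
      rcases i5 _ h with h | ⟨h, h'⟩ | ⟨t, h, hT, h' | h'⟩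
      · exact hlR _ h (H.mo_mem a haT)
      · exact hne (H.mo_inj a haT b h h')
      · exact H.mio t hT a haT h'.symm
      · exact hal (H.mo_inj a haT t hT h' ▸ h)
    have hmi : b ∈ T → mi b ∉ b :: L := by
      intro haT h
      rcases List.mem_cons.1 h with h | h
      · exact hbR (h ▸ H.mi_mem b haT)
      rcases i5 _ h with h | ⟨h, h'⟩ | ⟨t, h, hT, h' | h'⟩
      · exact hlR _ h (H.mi_mem b haT)
      · exact H.mio b haT b haT h'
      · exact hbl (H.mi_inj b haT t hT h' ▸ h)
      · exact H.mio b haT t hT h'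
    have hlast : ∀ x ∈ (b :: L).getLast?, x ∈ C := i3
    have i6 : ∀ x ∈ b :: L, x ∈ b :: l ∨ ∃ t ∈ b :: l, t ∈ T ∧ (x = mi t ∨ x = mo t) := by
      intro x hx
      rcases List.mem_cons.1 hx with rfl | h
      · exact Or.inl (by simp)
      rcases i5 x h with h | ⟨h, h'⟩ | ⟨t, h, hT⟩
      · exact Or.inl (by simp [h])
      · exact Or.inr ⟨b, by simp, h, Or.inr h'⟩
      · exact Or.inr ⟨t, by simp [h], hT⟩
    clear ih
    by_cases hK : (a ∈ T ∨ a ∈ C) ∧ (b ∈ T ∨ b ∈ C)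
    · by_cases haT : a ∈ T <;> by_cases hbT : b ∈ T
      · have moR := H.mo_mem a haT
        have miR := H.mi_mem b hbT
        have e1 : a ≠ mo a := (H.mo_adj a haT).ne
        have e2 : a ≠ mi b := fun h => haR (h ▸ miR)
        have e3 : mo a ≠ mi b := fun h => H.mio b hbT a haT h.symm
        refine ⟨mo a :: mi b :: b :: L, ?_, ?_, ?_, ?_, ?_⟩
        · rw [List.isChain_cons_cons, List.isChain_cons_cons, List.isChain_cons_cons]
          exact ⟨H.mo_adj a haT, H.hcl _ (H.hRC moR) _ (H.hRC miR) e3, (H.mi_adj b hbT).symm, i1⟩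
        · grind
        · simpa using hlast
        · grind
        · grind
      · have moR := H.mo_mem a haT
        have e1 : a ≠ mo a := (H.mo_adj a haT).ne
        have hbC := hK.2.resolve_left hbT
        refine ⟨mo a :: b :: L, ?_, ?_, ?_, ?_, ?_⟩
        · rw [List.isChain_cons_cons, List.isChain_cons_cons]
          exact ⟨H.mo_adj a haT, H.hcl _ (H.hRC moR) _ hbC (fun h => hbR (h ▸ moR)), i1⟩
        · grind
        · simpa using hlast
        · grind
        · grind
      · have miR := H.mi_mem b hbT
        have e2 : a ≠ mi b := fun h => haR (h ▸ miR)
        have haC := hK.1.resolve_left haT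
        refine ⟨mi b :: b :: L, ?_, ?_, ?_, ?_, ?_⟩
        · rw [List.isChain_cons_cons, List.isChain_cons_cons]
          exact ⟨H.hcl _ haC _ (H.hRC miR) e2, (H.mi_adj b hbT).symm, i1⟩
        · grind
        · simpa using hlast
        · grind
        · grind
      · have haC := hK.1.resolve_left haT
        have hbC := hK.2.resolve_left hbT
        refine ⟨b :: L, ?_, ?_, ?_, ?_, ?_⟩
        · rw [List.isChain_cons_cons]
          exact ⟨H.hcl _ haC _ hbC hne, i1⟩
        · grind
        · simpa using hlast
        · grind
        · grind
    · have hadj : G.Adj a b := hab.resolve_right hK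
      refine ⟨b :: L, ?_, ?_, ?_, ?_, ?_⟩
      · rw [List.isChain_cons_cons]
        exact ⟨hadj, i1⟩
      · grind
      · simpa using hlast
      · grind
      · exact fun x hx => (i6 x hx).imp id Or.inr

theorem expand2 {V : Type*} [DecidableEq V] {G : SimpleGraph V} {S T C R : Finset V} {mi mo : V → V}
    (H : Setup G S T C R mi mo) (L : List V) (hM : MP G (fun v => v ∈ T ∨ v ∈ C) L)
    (hn : L.Nodup) (hR : ∀ x ∈ L, x ∉ R) :
    ∃ L', List.IsChain G.Adj L' ∧ L'.Nodup ∧ (∀ x ∈ L'.head?, x ∈ C) ∧ (∀ x ∈ L'.getLast?, x ∈ C) ∧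
      (∀ x ∈ L, x ∈ L') ∧
      ∀ x ∈ L', x ∈ L ∨ (∃ t ∈ L, t ∈ T ∧ (x = mi t ∨ x = mo t)) := by
  cases L with
  | nil => exact ⟨[], by simp, by simp, by simp, by simp, by simp, by simp⟩
  | cons a l =>
    obtain ⟨hc, hh, hl⟩ := hM
    obtain ⟨L, i1, i2, i3, i4, i5⟩ := expand H l a hc hl hn hR
    have haR : a ∉ R := hR a (by simp)
    have hlR : ∀ x ∈ l, x ∉ R := fun x hx => hR x (by simp [hx])
    have hal : a ∉ l := (List.nodup_cons.1 hn).1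
    have haK : a ∈ T ∨ a ∈ C := hh a (by simp)
    by_cases haT : a ∈ T
    · have hmi : mi a ∉ a :: L := by
        intro h
        rcases List.mem_cons.1 h with h | h
        · exact haR (h ▸ H.mi_mem a haT)
        rcases i5 _ h with h | ⟨h, h'⟩ | ⟨t, h, hT, h' | h'⟩
        · exact hlR _ h (H.mi_mem a haT)
        · exact H.mio a haT a haT h'
        · exact hal (H.mi_inj a haT t hT h' ▸ h)
        · exact H.mio a haT t hT h'
      refine ⟨mi a :: a :: L, ?_, ?_, ?_, ?_, ?_, ?_⟩
      · rw [List.isChain_cons_cons]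
        exact ⟨(H.mi_adj a haT).symm, i1⟩
      · grind
      · simpa using H.hRC (H.mi_mem a haT)
      · simpa using i3
      · grind
      · grind
    · refine ⟨a :: L, i1, i2, ?_, i3, ?_, ?_⟩
      · simpa using haK.resolve_left haT
      · grind
      · grind

theorem expand3 {V : Type*} [DecidableEq V] {G : SimpleGraph V} {S T C R : Finset V} {mi mo : V → V}
    (H : Setup G S T C R mi mo) (L : List V) (hM : MP G (fun v => v ∈ T ∨ v ∈ C) L)
    (hn : L.Nodup) (hR : ∀ x ∈ L, x ∉ R) (E : Finset V) (hE : E ⊆ R)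
    (hmi : ∀ t ∈ T, mi t ∈ E) (hmo : ∀ t ∈ T, mo t ∈ E) :
    ∃ L', List.IsChain G.Adj L' ∧ L'.Nodup ∧ (∀ x ∈ L'.head?, x ∈ C) ∧ (∀ x ∈ L'.getLast?, x ∈ C) ∧
      ∀ x, x ∈ L' ↔ x ∈ L ∨ x ∈ E := by
  obtain ⟨L', h1, h2, h3, h4, h5, h6⟩ := expand2 H L hM hn hR
  set F := E.filter (· ∉ L') with hF
  have hFC : ∀ x ∈ F.toList, x ∈ C := by
    intro x hx
    rw [Finset.mem_toList, hF, Finset.mem_filter] at hx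
    exact H.hRC (hE hx.1)
  have hFL : ∀ x ∈ F.toList, x ∉ L' := by
    intro x hx
    rw [Finset.mem_toList, hF, Finset.mem_filter] at hx
    exact hx.2
  refine ⟨F.toList ++ L', ?_, ?_, ?_, ?_, ?_⟩
  · rw [List.isChain_append]
    refine ⟨?_, h1, ?_⟩
    · apply List.Pairwise.isChain
      refine F.nodup_toList.imp_of_mem ?_
      intro x y hx hy hxy
      exact H.hcl x (hFC x hx) y (hFC y hy) hxy
    · intro x hx y hy
      have hx' := List.mem_of_mem_getLast? hx
      have hy' := List.mem_of_mem_head? hy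
      exact H.hcl x (hFC x hx') y (h3 y hy) (fun h => hFL x hx' (h ▸ hy'))
  · rw [List.nodup_append]
    exact ⟨F.nodup_toList, h2, fun x hx y hy h => hFL x hx (h ▸ hy)⟩
  · intro x hx
    rw [List.head?_append] at hx
    cases hh : F.toList.head? with
    | none => rw [hh] at hx; exact h3 x (by simpa using hx)
    | some y =>
      rw [hh] at hx
      obtain rfl : y = x := by simpa using hx
      exact hFC _ (List.mem_of_mem_head? hh)
  · intro x hx
    rw [List.getLast?_append] at hx
    cases hh : L'.getLast? with
    | none => rw [hh] at hx; exact hFC _ (List.mem_of_mem_getLast? (by simpa using hx))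
    | some y =>
      rw [hh] at hx
      obtain rfl : y = x := by simpa using hx
      exact h4 _ hh
  · intro x
    rw [List.mem_append, Finset.mem_toList, hF, Finset.mem_filter]
    have := h5 x
    have h6 := h6 x
    constructor
    · rintro (h | h)
      · exact Or.inr h.1
      · rcases h6 h with h | ⟨t, -, hT, rfl | rfl⟩
        · exact Or.inl h
        · exact Or.inr (hmi t hT)
        · exact Or.inr (hmo t hT)
    · tauto

theorem close {V : Type*} {G : SimpleGraph V} {C : Finset V}
    (hcl : ∀ u ∈ C, ∀ v ∈ C, u ≠ v → G.Adj u v) {L : List V} (hc : List.IsChain G.Adj L)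
    (hn : L.Nodup) (hh : ∀ x ∈ L.head?, x ∈ C) (hl : ∀ x ∈ L.getLast?, x ∈ C)
    (h3 : 3 ≤ L.length) : CycOK G L := by
  refine Or.inr ⟨h3, ?_⟩
  cases L with
  | nil => simp at h3
  | cons y m =>
    rcases m.eq_nil_or_concat with rfl | ⟨m, x, rfl⟩
    · simp at h3
    have e : y :: m.concat x = (y :: m) ++ [x] := by simp
    have hx : x ∈ C := by
      apply hl x
      rw [e, List.getLast?_concat]; rfl
    have hy : y ∈ C := hh y (by simp)
    rw [Cycle.chain_coe_cons, ← List.cons_append, List.isChain_append]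
    refine ⟨hc, by simp, ?_⟩
    intro a ha b hb
    rw [e, List.getLast?_concat] at ha
    obtain rfl : x = a := by simpa using ha
    obtain rfl : y = b := by simpa using hb
    refine hcl _ hx _ hy ?_
    rintro rfl
    simp at hn

theorem clique_chain {V : Type*} {G : SimpleGraph V} {C : Finset V}
    (hcl : ∀ u ∈ C, ∀ v ∈ C, u ≠ v → G.Adj u v) {l : List V} (hn : l.Nodup) (h : ∀ x ∈ l, x ∈ C) :
    List.IsChain G.Adj l := by
  apply List.Pairwise.isChain
  refine List.Pairwise.imp_of_mem ?_ hn
  intro x y hx hy hxy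
  exact hcl x (h x hx) y (h y hy) hxy

theorem clique_cyc {V : Type*} {G : SimpleGraph V} {C : Finset V}
    (hcl : ∀ u ∈ C, ∀ v ∈ C, u ≠ v → G.Adj u v) (h3 : 3 ≤ C.card) : CycOK G C.toList := by
  refine close hcl (clique_chain hcl C.nodup_toList (by simp)) C.nodup_toList ?_ ?_ (by simpa using h3)
  · intro x hx; simpa using List.mem_of_mem_head? hx
  · intro x hx; simpa using List.mem_of_mem_getLast? hx

theorem special {V : Type*} [DecidableEq V] {G : SimpleGraph V} {C : Finset V}
    (hcl : ∀ u ∈ C, ∀ v ∈ C, u ≠ v → G.Adj u v) (D : Finset V) (hD : D ⊆ C) {x c c' : V}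
    (hx : x ∉ C) (hc : c ∈ D) (hc' : c' ∈ D) (hne : c ≠ c') (h1 : G.Adj x c) (h2 : G.Adj x c') :
    ∃ l : List V, l.Nodup ∧ CycOK G l ∧ ∀ v, v ∈ l ↔ v = x ∨ v ∈ D := by
  set m := c :: (((D \ {c, c'}).toList) ++ [c']) with hm
  have hmem : ∀ v, v ∈ m ↔ v ∈ D := by
    intro v
    simp only [hm, List.mem_cons, List.mem_append, Finset.mem_toList, Finset.mem_sdiff,
      Finset.mem_insert, Finset.mem_singleton, List.not_mem_nil, or_false]
    constructor
    · rintro (rfl | ⟨h, -⟩ | rfl) <;> assumption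
    · tauto
  have hmn : m.Nodup := by
    rw [hm, List.nodup_cons, List.nodup_append]
    refine ⟨by simp [hne], Finset.nodup_toList _, by simp, ?_⟩
    intro a ha b hb hab
    simp at ha hb
    rw [hab, hb] at ha
    exact ha.2.2 rfl
  have hxm : x ∉ m := fun h => hx (hD ((hmem x).1 h))
  refine ⟨x :: m, List.nodup_cons.2 ⟨hxm, hmn⟩, Or.inr ⟨by simp [hm], ?_⟩, by simp [hmem]⟩
  have hmc := clique_chain hcl hmn (fun v hv => hD ((hmem v).1 hv))
  rw [Cycle.chain_coe_cons, ← List.cons_append, List.isChain_append]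
  refine ⟨?_, by simp, ?_⟩
  · rw [hm, List.isChain_cons_cons, ← hm]
    exact ⟨h1, hmc⟩
  · intro a ha b hb
    obtain rfl : x = b := by simpa using hb
    have e : x :: m = (x :: c :: (D \ {c, c'}).toList) ++ [c'] := by simp [hm]
    rw [e, List.getLast?_concat] at ha
    obtain rfl : c' = a := by simpa using ha
    exact h2.symm

theorem reverse {V : Type*} [DecidableEq V] {G : SimpleGraph V} {S T C R : Finset V} {mi mo : V → V}
    (H : Setup G S T C R mi mo) (D : Finset V) (hD : D ⊆ C) (hRD : C \ R ⊆ D)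
    (hmi : ∀ t ∈ T, mi t ∈ D) (hmo : ∀ t ∈ T, mo t ∈ D) (h2 : 2 ≤ S.card)
    (hcard : 2 * S.card ≤ D.card) (r : ℕ) (h : NF G S T C R r) : Cov G (S ∪ D) r := by
  obtain ⟨L, us, hM, hU, hn, hmem, hr⟩ := h
  have hnR : ∀ x ∈ L ++ us.flatten, x ∉ R := by
    intro x hx hxR
    have h1 := (hmem x).1 hx
    have h2 := H.hRC hxR
    have h3 := H.hSC x
    simp at h1
    tauto
  have hn2 := List.nodup_append.1 hn
  obtain ⟨L', c1, c2, c3, c4, c5⟩ := expand3 H L hM hn2.1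
    (fun x hx => hnR x (List.mem_append_left _ hx)) (D ∩ R) Finset.inter_subset_right
    (fun t ht => by simp [hmi t ht, H.mi_mem t ht]) (fun t ht => by simp [hmo t ht, H.mo_mem t ht])
  have hnd : (L' ++ us.flatten).Nodup := by
    rw [List.nodup_append]
    refine ⟨c2, hn2.2.1, ?_⟩
    intro a ha b hb hab
    rcases (c5 a).1 ha with h | h
    · exact hn2.2.2 a h b hb hab
    · subst hab
      exact hnR a (List.mem_append_right _ hb) (Finset.mem_inter.1 h).2
  have hmm : ∀ v, v ∈ L' ++ us.flatten ↔ v ∈ S ∪ D := by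
    intro v
    have h1 := hmem v
    have h2 := c5 v
    have h3 : v ∈ R → v ∈ C := fun h => H.hRC h
    have h4 : v ∈ D → v ∈ C := fun h => hD h
    have h5 : v ∈ C \ R → v ∈ D := fun h => hRD h
    clear * - h1 h2 h3 h4 h5
    simp only [List.mem_append, Finset.mem_union, Finset.mem_sdiff, Finset.mem_inter] at *
    grind
  by_cases hL0 : L'.length = 0
  · have : L' = [] := List.length_eq_zero_iff.1 hL0
    subst this
    exact ⟨us, by omega, by simpa using hnd, by simpa using hmm, fun u hu => (hU u hu).cycOK⟩
  by_cases hL2 : L'.length = 2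
  · obtain ⟨x, y, rfl⟩ := List.length_eq_two.1 hL2
    have hA : ∀ v ∈ D \ {x, y}, v ∈ us.flatten ∧ v ∈ C := by
      intro v hv
      simp only [Finset.mem_sdiff, Finset.mem_insert, Finset.mem_singleton] at hv
      refine ⟨?_, hD hv.1⟩
      have := (hmm v).2 (by simp [hv.1])
      simp only [List.mem_append, List.mem_cons, List.not_mem_nil, or_false] at this
      exact this.resolve_left hv.2
    have hAc : D.card ≤ (D \ {x, y}).card + 2 := by
      have h1 := Finset.le_card_sdiff ({x, y} : Finset V) D
      have h2 := Finset.card_le_two (a := x) (b := y)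
      omega
    have hle := UPs.card H hU hn2.2.1 _ hA
    have hS2 : S.card = 2 := by omega
    obtain ⟨c, hc, c', hc', hne⟩ := Finset.one_lt_card.1 (show 1 < (D \ {x, y}).card by omega)
    obtain ⟨p, q, hpq, rfl⟩ := Finset.card_eq_two.1 hS2
    have hadj : ∀ c ∈ D \ {x, y}, G.Adj p c := by
      intro c hc
      obtain ⟨hcu, hcC⟩ := hA c hc
      obtain ⟨u, hu, hcu⟩ := List.mem_flatten.1 hcu
      obtain ⟨a, b, hab, ha, hb, ha', hb'⟩ := UP_nbrs (hU u hu)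
        ((List.nodup_flatten.1 hn2.2.1).1 u hu) hcu (Or.inr hcC)
      have haS := (H.hSC a).2 (fun h => ha (Or.inr h))
      have hbS := (H.hSC b).2 (fun h => hb (Or.inr h))
      simp only [Finset.mem_insert, Finset.mem_singleton] at haS hbS
      rcases haS with rfl | rfl
      · exact ha'
      · rcases hbS with rfl | rfl
        · exact hb'
        · exact absurd rfl hab
    have hpC : p ∉ C := (H.hSC p).1 (by simp)
    have hqC : q ∉ C := (H.hSC q).1 (by simp)
    obtain ⟨l, l1, l2, l3⟩ := special H.hcl D hD hpC (Finset.mem_sdiff.1 hc).1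
      (Finset.mem_sdiff.1 hc').1 hne (hadj c hc) (hadj c' hc')
    have hus : 1 ≤ us.length := by
      obtain ⟨u, hu, -⟩ := List.mem_flatten.1 (hA c hc).1
      exact List.length_pos_of_mem hu
    refine ⟨[[q], l], by simp; omega, ?_, ?_, ?_⟩
    · simp only [List.flatten_cons, List.flatten_nil, List.append_nil, List.singleton_append]
      refine List.nodup_cons.2 ⟨?_, l1⟩
      rw [l3]
      rintro (h | h)
      · exact hpq h.symm
      · exact hqC (hD h)
    · intro v
      simp [l3]
      tauto
    · intro u hu
      simp only [List.mem_cons, List.not_mem_nil, or_false] at hu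
      rcases hu with rfl | rfl
      · exact Or.inl rfl
      · exact l2
  · refine ⟨L' :: us, by simpa using hr, by simpa using hnd, by simpa using hmm, ?_⟩
    intro u hu
    rcases List.mem_cons.1 hu with rfl | hu
    · by_cases h1 : u.length = 1
      · exact Or.inl h1
      · exact close H.hcl c1 c2 c3 c4 (by omega)
    · exact (hU u hu).cycOK

theorem main_iff {V : Type*} [DecidableEq V] {G : SimpleGraph V} {S T C R : Finset V} {mi mo : V → V}
    (H : Setup G S T C R mi mo) (D : Finset V) (hD : D ⊆ C) (hRD : C \ R ⊆ D)
    (hmi : ∀ t ∈ T, mi t ∈ D) (hmo : ∀ t ∈ T, mo t ∈ D) (h2 : 2 ≤ S.card)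
    (hcard : 2 * S.card ≤ D.card) (r : ℕ) : Cov G (S ∪ D) r ↔ NF G S T C R r :=
  ⟨forward H D hD hRD (by omega) r, reverse H D hD hRD hmi hmo h2 hcard r⟩

theorem exists_setup {V : Type*} [DecidableEq V] (G : SimpleGraph V) (S C : Finset V)
    (hSC : ∀ v, v ∈ S ↔ v ∉ C) (hcl : ∀ u ∈ C, ∀ v ∈ C, u ≠ v → G.Adj u v) :
    ∃ T R mi mo, Setup G S T C R mi mo ∧ ((C \ R) ∪ (T.image mi ∪ T.image mo)).card ≤ 2 * S.card := by
  classical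
  let N : Finset V → Finset V := fun X => C.filter (fun c => ∃ x ∈ X, G.Adj x c)
  obtain ⟨X, hX, hmax⟩ := Finset.exists_max_image S.powerset
    (fun X => 2 * (X.card : ℤ) - (N X).card) ⟨∅, by simp⟩
  rw [Finset.mem_powerset] at hX
  set T := S \ X with hT
  set R := C \ N X with hR
  have hall : ∀ A : Finset (T × Bool), A.card ≤
      (A.biUnion (fun p => R.filter (fun c => G.Adj p.1.1 c))).card := by
    intro A
    set B : Finset V := A.image (fun p => p.1.1) with hB
    have hBT : B ⊆ T := by
      intro x hx
      simp only [hB, Finset.mem_image] at hx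
      obtain ⟨p, -, rfl⟩ := hx
      exact p.1.2
    have hdis : Disjoint X B := by
      rw [Finset.disjoint_right]
      intro x hx
      exact (Finset.mem_sdiff.1 (hBT hx)).2
    have h1 : A.card ≤ 2 * B.card := by
      have : A.card ≤ (B ×ˢ (Finset.univ : Finset Bool)).card := by
        apply Finset.card_le_card_of_injOn (fun p => (p.1.1, p.2))
        · intro p hp
          have : p ∈ A := hp
          simp only [Finset.coe_product, Set.mem_prod, Finset.mem_coe, hB, Finset.mem_image]
          exact ⟨⟨p, this, rfl⟩, by simp⟩
        · rintro ⟨⟨p, hp⟩, b⟩ - ⟨⟨q, hq⟩, b'⟩ - h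
          simp at h ⊢
          exact h
      rw [Finset.card_product] at this
      simp at this
      omega
    have h2 := hmax (X ∪ B) (by
      rw [Finset.mem_powerset]
      exact Finset.union_subset hX (hBT.trans Finset.sdiff_subset))
    rw [Finset.card_union_of_disjoint hdis] at h2
    have h3 : (N (X ∪ B)).card ≤ (N X).card +
        (A.biUnion (fun p => R.filter (fun c => G.Adj p.1.1 c))).card := by
      refine le_trans (Finset.card_le_card ?_) (Finset.card_union_le _ _)
      intro c hc
      simp only [N, Finset.mem_filter] at hc
      obtain ⟨hcC, x, hx, hadj⟩ := hc
      by_cases hcN : c ∈ N X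
      · exact Finset.mem_union_left _ hcN
      apply Finset.mem_union_right
      rcases Finset.mem_union.1 hx with hx | hx
      · exact absurd (by simp only [N, Finset.mem_filter]; exact ⟨hcC, x, hx, hadj⟩) hcN
      · simp only [hB, Finset.mem_image] at hx
        obtain ⟨p, hp, rfl⟩ := hx
        rw [Finset.mem_biUnion]
        refine ⟨p, hp, ?_⟩
        rw [Finset.mem_filter, hR, Finset.mem_sdiff]
        exact ⟨⟨hcC, hcN⟩, hadj⟩
    push_cast at h2
    omega
  rw [Finset.all_card_le_biUnion_card_iff_exists_injective] at hall
  obtain ⟨f, hfi, hf⟩ := hall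
  let mi : V → V := fun t => if h : t ∈ T then f (⟨t, h⟩, true) else t
  let mo : V → V := fun t => if h : t ∈ T then f (⟨t, h⟩, false) else t
  have emi : ∀ t (h : t ∈ T), mi t = f (⟨t, h⟩, true) := fun t h => dif_pos h
  have emo : ∀ t (h : t ∈ T), mo t = f (⟨t, h⟩, false) := fun t h => dif_pos h
  refine ⟨T, R, mi, mo, ?_, ?_⟩
  · refine ⟨Finset.sdiff_subset, Finset.sdiff_subset, hSC, hcl, ?_, ?_, ?_, ?_, ?_, ?_, ?_, ?_⟩
    · intro u hu c hc hadj
      rw [hT, Finset.mem_sdiff]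
      refine ⟨hu, fun hux => ?_⟩
      rw [hR, Finset.mem_sdiff] at hc
      exact hc.2 (by simp only [N, Finset.mem_filter]; exact ⟨hc.1, u, hux, hadj⟩)
    · intro t ht; rw [emi t ht]; exact (Finset.mem_filter.1 (hf (⟨t, ht⟩, true))).2
    · intro t ht; rw [emo t ht]; exact (Finset.mem_filter.1 (hf (⟨t, ht⟩, false))).2
    · intro t ht; rw [emi t ht]; exact (Finset.mem_filter.1 (hf (⟨t, ht⟩, true))).1
    · intro t ht; rw [emo t ht]; exact (Finset.mem_filter.1 (hf (⟨t, ht⟩, false))).1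
    · intro t ht t' ht' h
      rw [emi t ht, emi t' ht'] at h
      simpa using hfi h
    · intro t ht t' ht' h
      rw [emo t ht, emo t' ht'] at h
      simpa using hfi h
    · intro t ht t' ht' h
      rw [emi t ht, emo t' ht'] at h
      simpa using hfi h
  · have h0 := hmax ∅ (by simp)
    have h1 : C \ R ⊆ N X := by
      intro c hc
      rw [hR] at hc
      simp only [Finset.mem_sdiff] at hc
      by_contra h
      exact hc.2 ⟨hc.1, h⟩
    have h2 := Finset.card_le_card h1
    have h3 : (T.image mi ∪ T.image mo).card ≤ T.card + T.card :=
      (Finset.card_union_le _ _).trans (Nat.add_le_add Finset.card_image_le Finset.card_image_le)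
    have h4 := Finset.card_union_le (C \ R) (T.image mi ∪ T.image mo)
    have h5 : T.card + X.card = S.card := Finset.card_sdiff_add_card_eq_card hX
    have h6 : N ∅ = ∅ := by simp [N]
    rw [h6] at h0
    simp at h0
    omega

end CC

theorem CC.cov_one {V : Type*} {G : SimpleGraph V} {A : Finset V} {r : ℕ} (hr : r < 2)
    (hA : A.Nonempty) (h : CC.Cov G A r) :
    ∃ l : List V, l.Nodup ∧ (∀ v, v ∈ l ↔ v ∈ A) ∧ CC.CycOK G l := by
  obtain ⟨ls, h1, h2, h3, h4⟩ := h
  match ls, h1, h2, h3, h4 with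
  | [], _, _, h3, _ =>
    obtain ⟨a, ha⟩ := hA
    have := (h3 a).2 ha
    simp at this
  | [l], _, h2, h3, h4 =>
    refine ⟨l, by simpa using h2, fun v => by simpa using h3 v, h4 l (by simp)⟩
  | _ :: _ :: _, h1, _, _, _ =>
    simp at h1
    omega

theorem CC.length_eq {V : Type*} [DecidableEq V] {A : Finset V} {l : List V} (hn : l.Nodup)
    (h : ∀ v, v ∈ l ↔ v ∈ A) : l.length = A.card := by
  rw [← List.toFinset_card_of_nodup hn]
  congr 1
  ext v
  simp [h]

theorem CC.small {V : Type*} [DecidableEq V] (G : SimpleGraph V) (x : V) (C : Finset V)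
    (hx : ∀ v, v = x ↔ v ∉ C) (hcl : ∀ u ∈ C, ∀ v ∈ C, u ≠ v → G.Adj u v) (hC : 3 ≤ C.card) :
    ∃ D ⊆ C, D.card ≤ 2 ∧ ∀ r, 0 < r → (CC.Cov G ({x} ∪ C) r ↔ CC.Cov G ({x} ∪ D) r) := by
  have hxC : x ∉ C := (hx x).1 rfl
  by_cases h : ∃ c ∈ C, ∃ c' ∈ C, c ≠ c' ∧ G.Adj x c ∧ G.Adj x c'
  · obtain ⟨c, hc, c', hc', hne, h1, h2⟩ := h
    have hD : ({c, c'} : Finset V) ⊆ C := by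
      intro v hv
      simp at hv
      rcases hv with rfl | rfl <;> assumption
    refine ⟨{c, c'}, hD, Finset.card_le_two, fun r hr => ?_⟩
    have key : ∀ D ⊆ C, c ∈ D → c' ∈ D → CC.Cov G ({x} ∪ D) r := by
      intro D hD hcD hcD'
      obtain ⟨l, l1, l2, l3⟩ := CC.special hcl D hD hxC hcD hcD' hne h1 h2
      exact ⟨[l], by simp; omega, by simpa using l1, fun v => by simp [l3], by simpa using l2⟩
    exact ⟨fun _ => key _ hD (by simp) (by simp), fun _ => key _ subset_rfl hc hc'⟩
  · obtain ⟨c, hc⟩ : C.Nonempty := Finset.card_pos.1 (by omega)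
    have hcx : x ≠ c := fun e => hxC (e ▸ hc)
    refine ⟨{c}, by simpa using hc, by simp, fun r hr => ?_⟩
    by_cases h2 : r < 2
    · constructor
      · intro hcov
        exfalso
        obtain ⟨l, l1, l2, l3⟩ := CC.cov_one h2 ⟨x, by simp⟩ hcov
        have hl := CC.length_eq l1 l2
        rw [Finset.card_union_of_disjoint (by simpa using hxC)] at hl
        simp only [Finset.card_singleton] at hl
        rcases l3 with l3 | ⟨l3, l4⟩
        · omega
        · obtain ⟨y, hy, z, hz, hyz, a1, a2⟩ := CC.nbrs l1 l3 l4 ((l2 x).2 (by simp))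
          have memC : ∀ v, v ≠ x → v ∈ C := by
            intro v hv
            by_contra hcon
            exact hv ((hx v).2 hcon)
          exact h ⟨y, memC y a1.ne, z, memC z a2.ne', hyz, a1.symm, a2⟩
      · intro hcov
        exfalso
        obtain ⟨l, l1, l2, l3⟩ := CC.cov_one h2 ⟨x, by simp⟩ hcov
        have hl := CC.length_eq l1 l2
        rw [Finset.card_union_of_disjoint (by simpa using hcx)] at hl
        simp only [Finset.card_singleton] at hl
        rcases l3 with l3 | ⟨l3, l4⟩ <;> omega
    · constructor
      · intro _
        exact ⟨[[x], [c]], by simp; omega, by simp [hcx], fun v => by simp, by simp [CC.CycOK]⟩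
      · intro _
        refine ⟨[[x], C.toList], by simp; omega, ?_, fun v => by simp, ?_⟩
        · simp [hxC, C.nodup_toList]
        · intro l hl
          simp at hl
          rcases hl with rfl | rfl
          · simp [CC.CycOK]
          · exact CC.clique_cyc hcl hC

/-- Kernelization: if `S` is a nonempty co-vertex cover of `G` (the vertices outside `S` form
a clique), then there is a set `C' ⊆ V(G) \ S` with `|S ∪ C'| ≤ 3|S|` such that for every
positive integer `r`, `G` has a cycle cover of size at most `r` iff the induced subgraph
`G[S ∪ C']` has a cycle cover of size at most `r`. -/
theorem stmt6 {V : Type*} [Fintype V] [DecidableEq V] (G : SimpleGraph V)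
    (S : Finset V) (hS : S.Nonempty)
    (hclique : ∀ u v : V, u ∉ S → v ∉ S → u ≠ v → G.Adj u v) :
    ∃ C' : Finset V, Disjoint C' S ∧ (S ∪ C').card ≤ 3 * S.card ∧
      ∀ r : ℕ, 0 < r →
        (HasCycleCoverLE G r ↔
          HasCycleCoverLE (G.induce (↑(S ∪ C') : Set V)) r) := by
  have hcl : ∀ u ∈ Sᶜ, ∀ v ∈ Sᶜ, u ≠ v → G.Adj u v := fun u hu v hv =>
    hclique u v (by simpa using hu) (by simpa using hv)
  have hU : S ∪ Sᶜ = Finset.univ := Finset.union_compl S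
  have hS1 : 1 ≤ S.card := hS.card_pos
  suffices h : ∃ D ⊆ Sᶜ, D.card ≤ 2 * S.card ∧
      ∀ r, 0 < r → (CC.Cov G (S ∪ Sᶜ) r ↔ CC.Cov G (S ∪ D) r) by
    obtain ⟨D, hD, hc, h⟩ := h
    refine ⟨D, ?_, ?_, fun r hr => ?_⟩
    · rw [Finset.disjoint_left]
      intro v hv
      simpa using hD hv
    · have := Finset.card_union_le S D
      omega
    · rw [CC.cover_iff, CC.cov_induce, ← hU]
      exact h r hr
  by_cases hle : Sᶜ.card ≤ 2 * S.card
  · exact ⟨Sᶜ, subset_rfl, hle, fun r _ => Iff.rfl⟩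
  by_cases h2 : 2 ≤ S.card
  · obtain ⟨T, R, mi, mo, H, hB⟩ := CC.exists_setup G S Sᶜ (by simp) hcl
    have hBC : (Sᶜ \ R) ∪ (T.image mi ∪ T.image mo) ⊆ Sᶜ := by
      refine Finset.union_subset Finset.sdiff_subset (Finset.union_subset ?_ ?_)
      · intro v hv
        obtain ⟨t, ht, rfl⟩ := Finset.mem_image.1 hv
        exact H.hRC (H.mi_mem t ht)
      · intro v hv
        obtain ⟨t, ht, rfl⟩ := Finset.mem_image.1 hv
        exact H.hRC (H.mo_mem t ht)
    obtain ⟨D, hBD, hDC, hD⟩ := Finset.exists_subsuperset_card_eq hBC hB (by omega)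
    refine ⟨D, hDC, hD.le, fun r _ => ?_⟩
    rw [CC.main_iff H Sᶜ subset_rfl Finset.sdiff_subset (fun t ht => H.hRC (H.mi_mem t ht))
        (fun t ht => H.hRC (H.mo_mem t ht)) h2 (by omega) r,
      CC.main_iff H D hDC (fun v hv => hBD (Finset.mem_union_left _ hv))
        (fun t ht => hBD (Finset.mem_union_right _ (Finset.mem_union_left _
          (Finset.mem_image_of_mem _ ht))))
        (fun t ht => hBD (Finset.mem_union_right _ (Finset.mem_union_right _
          (Finset.mem_image_of_mem _ ht)))) h2 hD.ge r]
  · obtain ⟨x, rfl⟩ := Finset.card_eq_one.1 (show S.card = 1 by omega)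
    obtain ⟨D, h1, h3, h4⟩ := CC.small G x {x}ᶜ (by simp) hcl (by simp at hle ⊢; omega)
    exact ⟨D, h1, by simpa using h3, h4⟩
end

section
/- Let G be a simple graph whose vertex set is partitioned into two sets S and C' with |C'| > |S|, and let Q be a cycle cover of G. Then some cycle of Q either is a trivial cycle whose unique vertex belongs to C', or contains an edge both of whose endpoints belong to C'. -/
/-- If the vertex set of `G` is partitioned into `S` and `C'` with `|C'| > |S|`, and `Q` is a
cycle cover of `G` (a set of pairwise vertex-disjoint cycles, single vertices counting as
trivial cycles, covering every vertex exactly once), then some cycle of `Q` either is a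
trivial cycle whose unique vertex belongs to `C'`, or contains an edge both of whose
endpoints belong to `C'`. -/
theorem stmt8 {V : Type*} [Fintype V] [DecidableEq V] (G : SimpleGraph V)
    (S C' : Finset V) (hdisj : Disjoint S C') (hunion : S ∪ C' = Finset.univ)
    (hcard : S.card < C'.card)
    (Q : Finset (Finset V))
    (hcover : ∀ x : V, ∃! p, p ∈ Q ∧ x ∈ p)
    (hQ : ∀ p ∈ Q, (∃ x, p = {x}) ∨
      ∃ a : V, ∃ c : G.Walk a a, c.IsCycle ∧ ∀ x, x ∈ p ↔ x ∈ c.support) :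
    ∃ p ∈ Q, (∃ x, x ∈ C' ∧ p = {x}) ∨
      ∃ a : V, ∃ c : G.Walk a a, c.IsCycle ∧ (∀ x, x ∈ p ↔ x ∈ c.support) ∧
        ∃ i, i < c.length ∧ c.getVert i ∈ C' ∧ c.getVert (i + 1) ∈ C' := by
  by_contra hcon
  push Not at hcon
  have hmem : ∀ x, x ∉ C' → x ∈ S := by
    intro x hx
    have : x ∈ S ∪ C' := by rw [hunion]; exact Finset.mem_univ x
    rcases Finset.mem_union.1 this with h | h
    · exact h
    · exact absurd h hx
  have key : ∀ p ∈ Q, (p ∩ C').card ≤ (p ∩ S).card := by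
    intro p hp
    obtain ⟨h1, h2⟩ := hcon p hp
    rcases hQ p hp with ⟨x, rfl⟩ | ⟨a, c, hc, hs⟩
    · have hx : x ∉ C' := fun hx => h1 x hx rfl
      rw [Finset.singleton_inter_of_notMem hx]
      simp
    · have h3 := h2 a c hc hs
      have hpos : 3 ≤ c.length := hc.three_le_length
      let I := (Finset.range c.length).filter (fun i => c.getVert i ∈ C')
      have hA : p ∩ C' ⊆ I.image c.getVert := by
        intro x hx
        obtain ⟨hxp, hxC⟩ := Finset.mem_inter.1 hx
        obtain ⟨n, hn, hnl⟩ := SimpleGraph.Walk.mem_support_iff_exists_getVert.1 ((hs x).1 hxp)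
        rcases Nat.lt_or_ge n c.length with h | h
        · exact Finset.mem_image.2 ⟨n, by simp [I, h, hn, hxC], hn⟩
        · have hx0 : c.getVert 0 = x := by
            rw [← hn, c.getVert_of_length_le h, c.getVert_zero]
          exact Finset.mem_image.2 ⟨0, by
            simp only [I, Finset.mem_filter, Finset.mem_range]
            exact ⟨by omega, hx0 ▸ hxC⟩, hx0⟩
      refine (Finset.card_le_card hA).trans (Finset.card_image_le.trans ?_)
      refine Finset.card_le_card_of_injOn (fun i => c.getVert (i + 1)) ?_ ?_
      · intro i hi
        have hi' := Finset.mem_filter.1 (Finset.mem_coe.1 hi)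
        have hl := Finset.mem_range.1 hi'.1
        exact Finset.mem_coe.2 (Finset.mem_inter.2
          ⟨(hs _).2 (c.getVert_mem_support _), hmem _ (h3 i hl hi'.2)⟩)
      · intro i hi j hj hij
        have hi' := Finset.mem_range.1 (Finset.mem_filter.1 (Finset.mem_coe.1 hi)).1
        have hj' := Finset.mem_range.1 (Finset.mem_filter.1 (Finset.mem_coe.1 hj)).1
        have := hc.getVert_injOn (x₁ := i + 1) (x₂ := j + 1)
          ⟨by omega, by omega⟩ ⟨by omega, by omega⟩ hij
        omega
  have hC : C' ⊆ Q.biUnion (fun p => p ∩ C') := by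
    intro x hx
    obtain ⟨p, ⟨hp, hxp⟩, -⟩ := hcover x
    exact Finset.mem_biUnion.2 ⟨p, hp, Finset.mem_inter.2 ⟨hxp, hx⟩⟩
  have hS : Q.biUnion (fun p => p ∩ S) ⊆ S := by
    intro x hx
    obtain ⟨p, -, hxp⟩ := Finset.mem_biUnion.1 hx
    exact (Finset.mem_inter.1 hxp).2
  have hSc : (Q.biUnion (fun p => p ∩ S)).card = ∑ p ∈ Q, (p ∩ S).card := by
    apply Finset.card_biUnion
    intro p hp q hq hpq
    refine Finset.disjoint_left.2 ?_
    intro x hx hx'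
    exact hpq ((hcover x).unique ⟨hp, (Finset.mem_inter.1 hx).1⟩
      ⟨hq, (Finset.mem_inter.1 hx').1⟩)
  have e1 := (Finset.card_le_card hC).trans Finset.card_biUnion_le
  have e2 := Finset.sum_le_sum key
  have e3 := Finset.card_le_card hS
  omega
end

section
/- Let G be a simple graph, let S be a nonempty co-vertex cover of G, and let C = V(G) \ S with |C| > 2|S|. If G has a cycle cover of size at most r, then there exists a set C' ⊆ C with |C'| ≤ 2|S| such that the induced subgraph G' = G[S ∪ C'] admits a cycle-path cover of S in G' with C'-endpoints containing at most r − 1 cycles. -/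
/-- `G` has a cycle-path cover of `S` with `C`-endpoints containing at most `m` cycles: a set
`L` of pairwise vertex-disjoint simple paths and cycles (single vertices counting as trivial
cycles) such that every vertex of `S` belongs to exactly one element of `L`, the endpoints of
every path of `L` belong to `C`, and the set `Lc` of cycles of `L` has at most `m`
elements. -/
def HasCyclePathCover {V : Type*} (G : SimpleGraph V) (S C : Set V) (m : ℕ) : Prop :=
  ∃ L Lc : Finset (Finset V), Lc ⊆ L ∧
    (∀ p ∈ L, ∀ q ∈ L, p ≠ q → ∀ x, x ∈ p → x ∉ q) ∧
    (∀ v, v ∈ S → ∃ p ∈ L, v ∈ p) ∧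
    (∀ p ∈ Lc, (∃ x, p = {x}) ∨
      ∃ a : V, ∃ c : G.Walk a a, c.IsCycle ∧ ∀ x, x ∈ p ↔ x ∈ c.support) ∧
    (∀ p ∈ L, p ∉ Lc → ∃ a b : V, ∃ w : G.Walk a b, w.IsPath ∧
      (∀ x, x ∈ p ↔ x ∈ w.support) ∧ a ∈ C ∧ b ∈ C) ∧
    Lc.card ≤ m

theorem aux_shorten {V : Type*} [DecidableEq V] (G : SimpleGraph V) (S : Finset V)
    (hclique : ∀ u v : V, u ∉ S → v ∉ S → u ≠ v → G.Adj u v) :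
    ∀ (l : List V) (x : V), (x :: l).IsChain G.Adj → (x :: l).Nodup →
      (∀ y ∈ (x :: l).getLast?, y ∉ S) →
      ∃ t : List V, (x :: t).IsChain G.Adj ∧ List.Sublist t l ∧
        (∀ y ∈ S, y ∈ l → y ∈ t) ∧ (∀ y ∈ (x :: t).getLast?, y ∉ S) ∧
        (x :: t).countP (· ∉ S) + (if x ∈ S then 2 else if ∃ y ∈ t.head?, y ∈ S then 1 else 0)
          ≤ 2 * (x :: t).countP (· ∈ S) + 1 := by
  intro l
  induction l with
  | nil =>
    intro x _ _ h
    refine ⟨[], by simp, by simp, by simp, h, ?_⟩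
    have : x ∉ S := by simpa using h
    simp [this]
  | cons c l ih =>
    intro x h1 h2 h3
    rw [List.isChain_cons_cons] at h1
    obtain ⟨t, a1, a2, a3, a4, a5⟩ := ih c h1.2 (by simp_all) (by simpa [List.getLast?_cons_cons] using h3)
    have hbase : (if x ∈ S then True else if c ∈ S then True else
          ∃ d t', t = d :: t' ∧ d ∈ S) →
        ∃ t : List V, (x :: t).IsChain G.Adj ∧ List.Sublist t (c :: l) ∧
        (∀ y ∈ S, y ∈ (c :: l) → y ∈ t) ∧ (∀ y ∈ (x :: t).getLast?, y ∉ S) ∧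
        (x :: t).countP (· ∉ S) + (if x ∈ S then 2 else if ∃ y ∈ t.head?, y ∈ S then 1 else 0)
          ≤ 2 * (x :: t).countP (· ∈ S) + 1 := by
      intro hc
      refine ⟨c :: t, ?_, a2.cons_cons c, ?_, ?_, ?_⟩
      · rw [List.isChain_cons_cons]; exact ⟨h1.1, a1⟩
      · intro y hy hm
        simp only [List.mem_cons] at hm ⊢
        rcases hm with rfl | hm
        · exact Or.inl rfl
        · exact Or.inr (a3 y hy hm)
      · simpa [List.getLast?_cons_cons] using a4
      · by_cases hx : x ∈ S
        · by_cases hcS : c ∈ S <;> simp [hx, hcS, List.countP_cons] at a5 ⊢ <;> grind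
        · by_cases hcS : c ∈ S
          · simp [hx, hcS, List.countP_cons] at a5 ⊢; omega
          · simp only [hx, hcS, if_false] at hc
            obtain ⟨d, t', rfl, hd⟩ := hc
            simp [hx, hcS, hd, List.countP_cons] at a5 ⊢; omega
    by_cases hx : x ∈ S
    · exact hbase (by simp [hx])
    by_cases hcS : c ∈ S
    · exact hbase (by simp [hcS])
    cases t with
    | nil =>
      refine ⟨[], by simp, by simp, ?_, by simpa using hx, by simp [hx]⟩
      intro y hy hm
      simp only [List.mem_cons] at hm
      rcases hm with rfl | hm
      · exact absurd hy hcS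
      · exact a3 y hy hm
    | cons d t' =>
      by_cases hd : d ∈ S
      · exact hbase (by simp [hd])
      refine ⟨d :: t', ?_, a2.cons c, ?_, ?_, ?_⟩
      · rw [List.isChain_cons_cons] at a1 ⊢
        refine ⟨hclique _ _ hx hd ?_, a1.2⟩
        rintro rfl
        have := a2.subset (List.mem_cons_self)
        simp_all
      · intro y hy hm
        simp only [List.mem_cons] at hm
        rcases hm with rfl | hm
        · exact absurd hy hcS
        · exact a3 y hy hm
      · simpa [List.getLast?_cons_cons] using a4
      · simp [hx, hcS, hd, List.countP_cons] at a5 ⊢; omega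

theorem aux_shorten2 {V : Type*} [DecidableEq V] (G : SimpleGraph V) (S : Finset V)
    (hclique : ∀ u v : V, u ∉ S → v ∉ S → u ≠ v → G.Adj u v)
    (l : List V) (x : V) (h1 : (x :: l).IsChain G.Adj) (h2 : (x :: l).Nodup)
    (h3 : ∀ y ∈ (x :: l).getLast?, y ∉ S) (hx : x ∉ S) (hne : ∃ y ∈ S, y ∈ l) :
    ∃ t : List V, t ≠ [] ∧ t.IsChain G.Adj ∧ List.Sublist t (x :: l) ∧
        (∀ y ∈ S, y ∈ x :: l → y ∈ t) ∧ (∀ y ∈ t.getLast?, y ∉ S) ∧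
        (∀ y ∈ t.head?, y ∉ S) ∧
        t.countP (· ∉ S) ≤ 2 * t.countP (· ∈ S) := by
  obtain ⟨t, a1, a2, a3, a4, a5⟩ := aux_shorten G S hclique l x h1 h2 h3
  have key : ∀ y ∈ S, y ∈ x :: l → y ∈ t := by
    intro y hy hm
    simp only [List.mem_cons] at hm
    rcases hm with rfl | hm
    · exact absurd hy hx
    · exact a3 y hy hm
  cases t with
  | nil =>
    obtain ⟨y, hy, hm⟩ := hne
    simpa using a3 y hy hm
  | cons d t =>
    by_cases hd : d ∈ S
    · refine ⟨x :: d :: t, by simp, a1, a2.cons_cons x, ?_, a4, by simpa using hx, ?_⟩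
      · intro y hy hm
        exact List.mem_cons_of_mem _ (key y hy hm)
      · simp [hx, hd, List.countP_cons] at a5 ⊢; omega
    · refine ⟨d :: t, by simp, (List.isChain_cons_cons.1 a1).2, a2.cons x, key, ?_, by simpa using hd, ?_⟩
      · simpa [List.getLast?_cons_cons] using a4
      · simp [hx, hd, List.countP_cons] at a5 ⊢; omega

theorem aux_pair {V : Type*} [DecidableEq V] (S : Finset V) : ∀ (l : List V),
    (∃ l1 u v l2, l = l1 ++ u :: v :: l2 ∧ u ∉ S ∧ v ∉ S) ∨
    l.countP (· ∉ S) + (if ∃ y ∈ l.head?, y ∈ S then 1 else 0) ≤ l.countP (· ∈ S) + 1 := by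
  intro l
  induction l with
  | nil => right; simp
  | cons x l ih =>
    rcases ih with ⟨l1, u, v, l2, rfl, hu, hv⟩ | ih
    · exact Or.inl ⟨x :: l1, u, v, l2, by simp, hu, hv⟩
    · cases l with
      | nil => right; by_cases hx : x ∈ S <;> simp [hx]
      | cons y l =>
        by_cases hx : x ∈ S
        · right
          by_cases hy : y ∈ S <;> simp [hx, hy, List.countP_cons] at ih ⊢ <;> omega
        · by_cases hy : y ∈ S
          · right
            simp [hx, hy, List.countP_cons] at ih ⊢; omega
          · exact Or.inl ⟨[], x, y, l, by simp, hx, hy⟩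

/-- The kinds of pieces. -/
theorem aux_cycle {V : Type*} [DecidableEq V] (G : SimpleGraph V) (S : Finset V)
    (hclique : ∀ u v : V, u ∉ S → v ∉ S → u ≠ v → G.Adj u v)
    (p : Finset V) (a : V) (c : G.Walk a a) (hc : c.IsCycle) (hp : ∀ x, x ∈ p ↔ x ∈ c.support)
    (hbig : 2 * (p ∩ S).card < (p \ S).card) (hne : (p ∩ S).Nonempty) :
    ∃ t : List V, t ≠ [] ∧ t.IsChain G.Adj ∧ t.Nodup ∧ (∀ y ∈ t, y ∈ p) ∧
        (∀ y ∈ S, y ∈ p → y ∈ t) ∧ (∀ y ∈ t.getLast?, y ∉ S) ∧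
        (∀ y ∈ t.head?, y ∉ S) ∧
        t.countP (· ∉ S) ≤ 2 * t.countP (· ∈ S) := by
  have hch := c.isChain_adj_support
  have hnd := hc.support_nodup
  have hmem : ∀ x, x ∈ p ↔ x ∈ c.support.tail := by
    intro x
    rw [hp]
    rw [c.support_eq_cons, List.tail_cons, List.mem_cons]
    constructor
    · rintro (rfl | h)
      · exact c.end_mem_tail_support hc.not_nil
      · exact h
    · exact Or.inr
  have hpt : p = c.support.tail.toFinset := by ext x; simp [hmem]
  have hlast : c.support.getLast? = some a := by
    rw [List.getLast?_eq_some_getLast (by simp), c.getLast_support]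
  have hcons := c.support_eq_cons
  generalize hL : c.support.tail = T at *
  have c1 : (p ∩ S).card = T.countP (· ∈ S) := by
    rw [List.countP_eq_length_filter, ← List.toFinset_card_of_nodup (hnd.filter _)]
    congr 1; ext x; simp [hpt]
  have c2 : (p \ S).card = T.countP (· ∉ S) := by
    rw [List.countP_eq_length_filter, ← List.toFinset_card_of_nodup (hnd.filter _)]
    congr 1; ext x; simp [hpt]
  rw [c1, c2] at hbig
  have hsplit : ∃ l1 u v l2, a :: T = l1 ++ u :: v :: l2 ∧ u ∉ S ∧ v ∉ S := by
    rcases aux_pair S (a :: T) with h | h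
    · exact h
    · exfalso
      have hpos := hne.card_pos
      rw [c1] at hpos
      by_cases ha : a ∈ S <;> simp only [List.countP_cons] at h <;> simp [ha] at h hbig <;> omega
  obtain ⟨l1, u, v, l2, he, hu, hv⟩ := hsplit
  rw [hcons, he] at hch
  rw [hcons] at hlast
  -- the rotated list
  have hfin : ∃ l, (v :: l).IsChain G.Adj ∧ (v :: l).Perm T ∧ (∀ y ∈ (v :: l).getLast?, y ∉ S) := by
    cases l1 with
    | nil =>
      simp at he
      obtain ⟨rfl, rfl⟩ := he
      refine ⟨l2, (List.isChain_cons_cons.1 hch).2, List.Perm.refl _, ?_⟩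
      rw [List.getLast?_cons_cons] at hlast
      rw [hlast]; simpa using hu
    | cons b l1 =>
      simp at he
      obtain ⟨rfl, rfl⟩ := he
      refine ⟨l2 ++ l1 ++ [u], ?_, ?_, ?_⟩
      · have e1 : a :: l1 ++ u :: v :: l2 = (a :: (l1 ++ [u])) ++ (v :: l2) := by simp
        have e2 : v :: (l2 ++ l1 ++ [u]) = (v :: l2) ++ (l1 ++ [u]) := by simp
        have e3 : a :: (l1 ++ u :: v :: l2) = (a :: (l1 ++ [u])) ++ (v :: l2) := by simp
        rw [e1] at hch
        rw [e3] at hlast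
        rw [List.isChain_append] at hch
        rw [e2, List.isChain_append]
        obtain ⟨q1, q2, q3⟩ := hch
        rw [List.isChain_cons] at q1
        refine ⟨q2, q1.2, ?_⟩
        intro x hx y hy
        have : (v :: l2).getLast? = some a := by
          rw [← hlast, List.getLast?_append, List.getLast?_cons]; rfl
        rw [this] at hx
        simp at hx
        subst hx
        exact q1.1 y hy
      · rw [List.perm_iff_count]
        intro z
        simp [List.count_cons, List.count_append]; omega
      · have e2 : v :: (l2 ++ l1 ++ [u]) = (v :: (l2 ++ l1)) ++ [u] := by simp
        rw [e2, List.getLast?_append]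
        simpa using hu
  obtain ⟨l, f1, f2, f3⟩ := hfin
  obtain ⟨t, g1, g2, g3, g4, g5, g6, g7⟩ := aux_shorten2 G S hclique l v f1 (f2.nodup_iff.2 hnd) f3 hv (by
    obtain ⟨y, hy⟩ := hne
    rw [Finset.mem_inter] at hy
    refine ⟨y, hy.2, ?_⟩
    have := f2.mem_iff.2 ((hmem y).1 hy.1)
    rcases List.mem_cons.1 this with rfl | h
    · exact absurd hy.2 hv
    · exact h)
  refine ⟨t, g1, g2, g3.nodup (f2.nodup_iff.2 hnd), ?_, ?_, g5, g6, g7⟩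
  · intro y hy
    exact (hmem y).2 (f2.mem_iff.1 (g3.subset hy))
  · intro y hy hm
    exact g4 y hy (f2.mem_iff.2 ((hmem y).1 hm))

theorem aux_piece {V : Type*} [DecidableEq V] (G : SimpleGraph V) (S : Finset V)
    (hclique : ∀ u v : V, u ∉ S → v ∉ S → u ≠ v → G.Adj u v)
    (p : Finset V) (h : (∃ x, p = {x}) ∨
      ∃ a : V, ∃ c : G.Walk a a, c.IsCycle ∧ ∀ x, x ∈ p ↔ x ∈ c.support) :
    ∃ q : Finset V, q ⊆ p ∧ (∀ x ∈ S, x ∈ p → x ∈ q) ∧ (q \ S).card ≤ 2 * (p ∩ S).card ∧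
      ((p \ S).card ≤ 2 * (p ∩ S).card → q = p) ∧
      (¬ (p \ S).card ≤ 2 * (p ∩ S).card → q.Nonempty → 
        ∃ a b : V, ∃ w : G.Walk a b, w.IsPath ∧ (∀ x, x ∈ q ↔ x ∈ w.support) ∧ a ∉ S ∧ b ∉ S) := by
  by_cases hb : (p \ S).card ≤ 2 * (p ∩ S).card
  · exact ⟨p, subset_rfl, fun _ _ h => h, hb, fun _ => rfl, fun h => absurd hb h⟩
  by_cases hne : (p ∩ S).Nonempty
  swap
  · refine ⟨∅, by simp, ?_, by simp, fun h => absurd h hb, by simp⟩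
    intro x hx hm
    exact absurd ⟨x, Finset.mem_inter.2 ⟨hm, hx⟩⟩ hne
  rcases h with ⟨x, rfl⟩ | ⟨a, c, hc, hp⟩
  · exfalso
    have h1 := hne.card_pos
    have h2 : ({x} \ S : Finset V).card ≤ 1 := (Finset.card_le_card Finset.sdiff_subset).trans (by simp)
    omega
  obtain ⟨t, g1, g2, g3, g4, g5, g6, g7, g8⟩ := aux_cycle G S hclique p a c hc hp (by omega) hne
  refine ⟨t.toFinset, ?_, ?_, ?_, fun h => absurd h hb, fun _ _ => ?_⟩
  · intro y hy; exact g4 y (by simpa using hy)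
  · intro y hy hm; simpa using g5 y hy hm
  · have c1 : (p ∩ S).card = t.countP (· ∈ S) := by
      rw [List.countP_eq_length_filter, ← List.toFinset_card_of_nodup (g3.filter _)]
      congr 1; ext x; simp; grind
    have c2 : (t.toFinset \ S).card = t.countP (· ∉ S) := by
      rw [List.countP_eq_length_filter, ← List.toFinset_card_of_nodup (g3.filter _)]
      congr 1; ext x; simp
    omega
  · refine ⟨_, _, SimpleGraph.Walk.ofSupport t g1 g2, ?_, ?_, ?_, ?_⟩
    · rw [SimpleGraph.Walk.isPath_def, SimpleGraph.Walk.support_ofSupport]; exact g3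
    · simp
    · exact g7 _ (by simp [List.head?_eq_some_head g1])
    · exact g6 _ (by simp [List.getLast?_eq_some_getLast g1])

theorem stmt11 {V : Type*} [Fintype V] [DecidableEq V] (G : SimpleGraph V)
    (S : Finset V) (hS : S.Nonempty)
    (hclique : ∀ u v : V, u ∉ S → v ∉ S → u ≠ v → G.Adj u v)
    (hbig : 2 * S.card < (Finset.univ \ S).card)
    (r : ℕ) (h : HasCycleCoverLE G r) :
    ∃ C' : Finset V, Disjoint C' S ∧ C'.card ≤ 2 * S.card ∧
      HasCyclePathCover (G.induce (↑(S ∪ C') : Set V))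
        {x : (↑(S ∪ C') : Set V) | (x : V) ∈ S}
        {x : (↑(S ∪ C') : Set V) | (x : V) ∈ C'} (r - 1) := by
  classical
  obtain ⟨P, hPr, hPu, hPc⟩ := h
  have hdisj : ∀ p ∈ P, ∀ q ∈ P, p ≠ q → ∀ x, x ∈ p → x ∉ q := by
    intro p hp q hq hpq x hx hxq
    exact hpq ((hPu x).unique ⟨hp, hx⟩ ⟨hq, hxq⟩)
  have hpd : (P : Set (Finset V)).PairwiseDisjoint id := by
    intro p hp q hq hpq
    exact Finset.disjoint_left.2 (fun x hx => hdisj p hp q hq hpq x hx)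
  have hSsum : ∑ p ∈ P, (p ∩ S).card = S.card := by
    rw [← Finset.card_biUnion]
    · congr 1; ext x
      simp only [Finset.mem_biUnion, Finset.mem_inter]
      constructor
      · rintro ⟨_, _, _, h⟩; exact h
      · intro hx
        obtain ⟨p, hp, _⟩ := hPu x
        exact ⟨p, hp.1, hp.2, hx⟩
    · intro p hp q hq hpq
      exact (hpd hp hq hpq).mono Finset.inter_subset_left Finset.inter_subset_left
  have hCsum : ∑ p ∈ P, (p \ S).card = (Finset.univ \ S).card := by
    rw [← Finset.card_biUnion]
    · congr 1; ext x
      simp only [Finset.mem_biUnion, Finset.mem_sdiff, Finset.mem_univ, true_and]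
      constructor
      · rintro ⟨_, _, _, h⟩; exact h
      · intro hx
        obtain ⟨p, hp, _⟩ := hPu x
        exact ⟨p, hp.1, hp.2, hx⟩
    · intro p hp q hq hpq
      exact (hpd hp hq hpq).mono Finset.sdiff_subset Finset.sdiff_subset
  have hex : ∃ p ∈ P, ¬ (p \ S).card ≤ 2 * (p ∩ S).card := by
    by_contra! hcon
    have := Finset.sum_le_sum hcon
    rw [← Finset.mul_sum, hSsum, hCsum] at this
    omega
  have hpiece := fun p : P => aux_piece G S hclique p.1 (hPc p.1 p.2)
  choose f0 hf0 using hpiece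
  let f : Finset V → Finset V := fun p => if hp : p ∈ P then f0 ⟨p, hp⟩ else ∅
  have hf : ∀ p (hp : p ∈ P), f p = f0 ⟨p, hp⟩ := fun p hp => by simp [f, hp]
  let C' : Finset V := P.biUnion (fun p => f p \ S)
  have hsub : ∀ p ∈ P, ∀ x ∈ f p, x ∈ (↑(S ∪ C') : Set V) := by
    intro p hp x hx
    by_cases hxS : x ∈ S
    · simp [hxS]
    · simp only [C', Finset.coe_union, Set.mem_union, Finset.mem_coe, Finset.mem_biUnion, Finset.mem_sdiff]
      exact Or.inr ⟨p, hp, hx, hxS⟩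
  have hCmem : ∀ p ∈ P, ∀ x ∈ f p, x ∉ S → x ∈ C' := by
    intro p hp x hx hxS
    simp only [C', Finset.mem_biUnion, Finset.mem_sdiff]
    exact ⟨p, hp, hx, hxS⟩
  refine ⟨C', ?_, ?_, ?_⟩
  · rw [Finset.disjoint_left]
    intro x hx
    simp only [C', Finset.mem_biUnion, Finset.mem_sdiff] at hx
    obtain ⟨_, _, _, h⟩ := hx
    exact h
  · calc C'.card ≤ ∑ p ∈ P, (f p \ S).card := Finset.card_biUnion_le
      _ ≤ ∑ p ∈ P, 2 * (p ∩ S).card := Finset.sum_le_sum (fun p hp => by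
          rw [hf p hp]; exact (hf0 ⟨p, hp⟩).2.2.1)
      _ = 2 * S.card := by rw [← Finset.mul_sum, hSsum]
  · clear_value C'
    let g : Finset V → Finset (↑(S ∪ C') : Set V) :=
      fun p => (f p).subtype (fun x => x ∈ (↑(S ∪ C') : Set V))
    have hg : ∀ p, ∀ x : (↑(S ∪ C') : Set V), x ∈ g p ↔ (x : V) ∈ f p := by
      intro p x; exact Finset.mem_subtype
    refine ⟨(P.filter (fun p => (f p).Nonempty)).image g,
      (P.filter (fun p => (f p).Nonempty ∧ (p \ S).card ≤ 2 * (p ∩ S).card)).image g, ?_, ?_, ?_, ?_, ?_, ?_⟩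
    · apply Finset.image_subset_image
      intro p; simp only [Finset.mem_filter]; tauto
    · intro p hp q hq hpq x hx hxq
      simp only [Finset.mem_image, Finset.mem_filter] at hp hq
      obtain ⟨p, ⟨hp, _⟩, rfl⟩ := hp
      obtain ⟨q, ⟨hq, _⟩, rfl⟩ := hq
      rw [hg] at hx hxq
      rw [hf p hp] at hx
      rw [hf q hq] at hxq
      exact hdisj p hp q hq (fun h => hpq (by rw [h])) x ((hf0 ⟨p, hp⟩).1 hx) ((hf0 ⟨q, hq⟩).1 hxq)
    · intro v hv
      obtain ⟨p, ⟨hp, hvp⟩, _⟩ := hPu v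
      have : (v : V) ∈ f p := by rw [hf p hp]; exact (hf0 ⟨p, hp⟩).2.1 v hv hvp
      exact ⟨g p, Finset.mem_image_of_mem _ (Finset.mem_filter.2 ⟨hp, ⟨_, this⟩⟩), (hg p v).2 this⟩
    · intro p hp
      simp only [Finset.mem_image, Finset.mem_filter] at hp
      obtain ⟨p, ⟨hp, _, hsm⟩, rfl⟩ := hp
      have hfp : f p = p := by rw [hf p hp]; exact (hf0 ⟨p, hp⟩).2.2.2.1 hsm
      rcases hPc p hp with ⟨x, hx⟩ | ⟨a, c, hc, hx⟩
      · left
        have hxin : x ∈ (↑(S ∪ C') : Set V) := hsub p hp x (by rw [hfp, hx]; simp)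
        refine ⟨⟨x, hxin⟩, ?_⟩
        ext y
        rw [hg, hfp, hx, Finset.mem_singleton, Finset.mem_singleton, Subtype.ext_iff]
      · right
        have hin : ∀ x ∈ c.support, x ∈ (↑(S ∪ C') : Set V) := fun x h =>
          hsub p hp x (by rw [hfp, hx]; exact h)
        refine ⟨_, c.induce _ hin, ?_, ?_⟩
        · apply SimpleGraph.Walk.IsCycle.of_map (f := (SimpleGraph.Embedding.induce _).toHom)
          rw [SimpleGraph.Walk.map_induce]
          exact hc
        · intro x
          rw [hg, hfp, hx, SimpleGraph.Walk.support_induce]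
          simp
    · intro p hp hpn
      simp only [Finset.mem_image, Finset.mem_filter] at hp hpn
      obtain ⟨p, ⟨hp, hne⟩, rfl⟩ := hp
      have hns : ¬ (p \ S).card ≤ 2 * (p ∩ S).card := fun h => hpn ⟨p, ⟨hp, hne, h⟩, rfl⟩
      have := (hf0 ⟨p, hp⟩).2.2.2.2 hns
      rw [← hf p hp] at this
      obtain ⟨a, b, w, hw, hx, ha, hb⟩ := this hne
      have hin : ∀ x ∈ w.support, x ∈ (↑(S ∪ C') : Set V) := fun x h =>
        hsub p hp x (by rw [hx]; exact h)
      refine ⟨_, _, w.induce _ hin, ?_, ?_, ?_, ?_⟩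
      · apply SimpleGraph.Walk.IsPath.of_map (f := (SimpleGraph.Embedding.induce _).toHom)
        rw [SimpleGraph.Walk.map_induce]
        exact hw
      · intro x
        rw [hg, hx, SimpleGraph.Walk.support_induce]
        simp
      · exact hCmem p hp a ((hx a).2 w.start_mem_support) ha
      · exact hCmem p hp b ((hx b).2 w.end_mem_support) hb
    · refine Finset.card_image_le.trans ?_
      obtain ⟨p, hp, hns⟩ := hex
      have : P.filter (fun p => (f p).Nonempty ∧ (p \ S).card ≤ 2 * (p ∩ S).card) ⊂ P := by
        rw [Finset.filter_ssubset]
        exact ⟨p, hp, fun h => hns h.2⟩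
      have := Finset.card_lt_card this
      omega
end
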